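/- arXiv:math/0609235 — 2 statements merged into one kernel-verified Lean document; each statement's English description precedes it below -/
import Mathlib

section
/- (Relative Steiner realization) Let (X,d) be a proper metric space and S ⊂ X a nonempty compact subset with St(S,X) < ∞, where St(S,X) = inf{H^1(C) : C is a continuum in X and C ∪ S is a continuum}. Then the infimum is attained: there exists a continuum C ⊂ X with C ∪ S a continuum and H^1(C) = St(S,X). -/
open Metric MeasureTheory
open scoped ENNReal NNReal

/-- One-dimensional Hausdorff measure of a subset of a metric space
(with the Borel σ-algebra). -/
noncomputable def H1 (X : Type*) [MetricSpace X] : Set X → ℝ≥0∞ :=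
  letI : MeasurableSpace X := borel X
  haveI : BorelSpace X := ⟨rfl⟩
  fun A => MeasureTheory.Measure.hausdorffMeasure 1 A

/-- Packing number of a subset of a metric space: the supremum of cardinalities
of finite subsets of `A` whose open `ε`-balls are pairwise disjoint. -/
noncomputable def packingNumber {X : Type*} [MetricSpace X] (A : Set X) (ε : ℝ) : ℕ∞ :=
  ⨆ (s : Finset X) (_ : ↑s ⊆ A ∧ (s : Set X).Pairwise
      fun x y => Disjoint (Metric.ball x ε) (Metric.ball y ε)), (s.card : ℕ∞)

/-- Relative Steiner invariant of a subset `S` of a metric space `X`. -/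
noncomputable def relSteiner (X : Type*) [MetricSpace X] (S : Set X) : ℝ≥0∞ :=
  sInf {r : ℝ≥0∞ | ∃ C : Set X, IsCompact C ∧ IsConnected C ∧
    IsCompact (C ∪ S) ∧ IsConnected (C ∪ S) ∧ r = H1 X C}

/-- Absolute Steiner invariant of a compact metric space `S`. -/
noncomputable def absSteiner (S : Type*) [MetricSpace S] : ℝ≥0∞ :=
  sInf {r : ℝ≥0∞ | ∃ (X : Type) (_ : MetricSpace X) (ι : S → X),
    Isometry ι ∧ r = relSteiner X (Set.range ι)}



namespace RelSteinerAux
open Set Filter Topology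

theorem bump {X : Type*} [MetricSpace X] {A G U : Set X} (hA : IsCompact A)
    (hAc : IsPreconnected A) (hG : IsClosed G) (hU : IsOpen U) (hUG : U ⊆ G) (hAG : ¬ A ⊆ G)
    {y : X} (hy : y ∈ A ∩ G) : ∃ z ∈ connectedComponentIn (A ∩ G) y, z ∉ U := by
  by_contra! hcon
  apply hAG
  have hP : IsCompact (A ∩ G) := hA.inter_right hG
  have : CompactSpace ↥(A ∩ G) := isCompact_iff_compactSpace.1 hP
  set y' : ↥(A ∩ G) := ⟨y, hy⟩
  have h1 : connectedComponent y' ⊆ Subtype.val ⁻¹' U := by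
    intro z hz
    apply hcon
    rw [connectedComponentIn_eq_image hy]
    exact ⟨z, hz, rfl⟩
  rw [connectedComponent_eq_iInter_isClopen] at h1
  have hUo : IsOpen (Subtype.val ⁻¹' U : Set ↥(A ∩ G)) := hU.preimage continuous_subtype_val
  have h2 : ∃ W : Set ↥(A ∩ G), IsClopen W ∧ y' ∈ W ∧ W ⊆ Subtype.val ⁻¹' U := by
    have : Nonempty { s : Set ↥(A ∩ G) // IsClopen s ∧ y' ∈ s } :=
      ⟨⟨univ, isClopen_univ, mem_univ _⟩⟩
    obtain ⟨W, hW⟩ := exists_subset_nhds_of_compactSpace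
      (V := fun s : { s : Set ↥(A ∩ G) // IsClopen s ∧ y' ∈ s } => (s : Set ↥(A ∩ G)))
      (by
        rintro ⟨s, hs, hs'⟩ ⟨t, ht, ht'⟩
        exact ⟨⟨s ∩ t, hs.inter ht, hs', ht'⟩, inter_subset_left, inter_subset_right⟩)
      (fun s => s.2.1.1) (U := Subtype.val ⁻¹' U) (fun x hx => hUo.mem_nhds (h1 hx))
    exact ⟨W, W.2.1, W.2.2, hW⟩
  obtain ⟨W, hW, hyW, hWU⟩ := h2
  obtain ⟨O, hO, hOW⟩ := isOpen_induced_iff.1 hW.2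
  have hWc : IsClosed (Subtype.val '' W) :=
    (hW.1.isCompact.image continuous_subtype_val).isClosed
  have hsub : A ∩ (O ∩ U) ⊆ Subtype.val '' W := by
    rintro z ⟨hzA, hzO, hzU⟩
    refine ⟨⟨z, hzA, hUG hzU⟩, ?_, rfl⟩
    rw [← hOW]; exact hzO
  have hsub2 : Subtype.val '' W ⊆ O ∩ U := by
    rintro _ ⟨z, hz, rfl⟩
    exact ⟨by rw [← hOW] at hz; exact hz, hWU hz⟩
  by_contra hne
  obtain ⟨a, haA, haG⟩ := not_subset.1 hne
  obtain ⟨b, hbA, hb1, hb2⟩ := hAc (O ∩ U) (Subtype.val '' W)ᶜ (hO.inter hU) hWc.isOpen_compl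
    (fun z _ => by
      by_cases hz : z ∈ Subtype.val '' W
      · exact Or.inl (hsub2 hz)
      · exact Or.inr hz)
    ⟨y, hy.1, hsub2 ⟨y', hyW, rfl⟩⟩
    ⟨a, haA, fun h => haG (hUG (hsub2 h).2)⟩
  exact hb2 (hsub ⟨hbA, hb1⟩)

theorem isPreconnected_limit {X : Type*} [MetricSpace X] {C : Set X} (hC : IsCompact C)
    (h : ∀ η > 0, ∃ K : Set X, IsPreconnected K ∧ K ⊆ thickening η C ∧ C ⊆ thickening η K) :
    IsPreconnected C := by
  rw [isPreconnected_iff_subset_of_fully_disjoint_closed hC.isClosed]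
  intro u v hu hv huv hd
  by_contra! hcon
  obtain ⟨⟨a, haC, hau⟩, ⟨b, hbC, hbv⟩⟩ := And.imp not_subset.1 not_subset.1 hcon
  have hav : a ∈ v := (huv haC).resolve_left hau
  have hbu : b ∈ u := (huv hbC).resolve_right hbv
  have hd' : Disjoint (C ∩ u) (C ∩ v) := hd.mono inter_subset_right inter_subset_right
  obtain ⟨η, hη, hdis⟩ := hd'.exists_thickenings (hC.inter_right hu) (hC.inter_right hv).isClosed
  obtain ⟨K, hK, h1, h2⟩ := h η hη
  have key : ∀ x ∈ C, ∃ k ∈ K, dist x k < η := fun x hx => mem_thickening_iff.1 (h2 hx)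
  obtain ⟨k1, hk1, hk1'⟩ := key a haC
  obtain ⟨k2, hk2, hk2'⟩ := key b hbC
  obtain ⟨z, _, hz1, hz2⟩ := hK (thickening η (C ∩ u)) (thickening η (C ∩ v)) isOpen_thickening
    isOpen_thickening
    (fun z hz => by
      obtain ⟨c, hc, hc'⟩ := mem_thickening_iff.1 (h1 hz)
      rcases huv hc with h | h
      · exact Or.inl (mem_thickening_iff.2 ⟨c, ⟨hc, h⟩, hc'⟩)
      · exact Or.inr (mem_thickening_iff.2 ⟨c, ⟨hc, h⟩, hc'⟩))
    ⟨k2, hk2, mem_thickening_iff.2 ⟨b, ⟨hbC, hbu⟩, by rwa [dist_comm]⟩⟩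
    ⟨k1, hk1, mem_thickening_iff.2 ⟨a, ⟨haC, hav⟩, by rwa [dist_comm]⟩⟩
  exact disjoint_left.1 hdis hz1 hz2

theorem ediam_le_hausdorff {X : Type*} [MetricSpace X] [MeasurableSpace X] [BorelSpace X] {A : Set X}
    (hA : IsPreconnected A) : ediam A ≤ Measure.hausdorffMeasure 1 A := by
  refine Metric.ediam_le fun x hx y hy => ?_
  have hl : LipschitzWith 1 (fun z : X => dist x z) := LipschitzWith.dist_right x
  have h1 := (hl.lipschitzOnWith (s := A)).hausdorffMeasure_image_le (d := 1) zero_le_one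
  rw [hausdorffMeasure_real] at h1
  have h2 : Icc (0 : ℝ) (dist x y) ⊆ (fun z : X => dist x z) '' A := by
    have := (hA.image _ hl.continuous.continuousOn).Icc_subset (mem_image_of_mem _ hx)
      (mem_image_of_mem _ hy)
    simpa using this
  have h3 := (measure_mono (μ := volume) h2).trans h1
  rw [Real.volume_Icc, sub_zero, ← edist_dist] at h3
  simpa using h3

theorem eilenberg {X : Type*} [MetricSpace X] [MeasurableSpace X] [BorelSpace X] {K : Set X}
    (p : X) {a b : ℝ} (M : ℕ)
    (hK : Measure.hausdorffMeasure 1 K < ((M + 1 : ℕ) : ℝ≥0∞) * ENNReal.ofReal (b - a)) :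
    ∃ r ∈ Ioo a b, (K ∩ sphere p r).encard ≤ M := by
  by_contra! hcon
  obtain ⟨c, hc1, hc2⟩ := exists_between hK
  have hcov : ∀ k : ℕ, ∃ t : ℕ → Set X, K ⊆ ⋃ n, t n ∧ (∀ n, ediam (t n) ≤ ((k : ℝ≥0∞) + 1)⁻¹) ∧
      ∑' n, ediam (t n) < c := by
    intro k
    rw [Measure.hausdorffMeasure_apply] at hc1
    have h1 := lt_of_le_of_lt (le_iSup₂ (f := fun (r : ℝ≥0∞) (_ : 0 < r) =>
        ⨅ (t : ℕ → Set X) (_ : K ⊆ ⋃ n, t n) (_ : ∀ n, ediam (t n) ≤ r),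
          ∑' n, ⨆ _ : (t n).Nonempty, ediam (t n) ^ (1:ℝ)) ((k : ℝ≥0∞) + 1)⁻¹ (by simp)) hc1
    simp only [iInf_lt_iff] at h1
    obtain ⟨t, ht1, ht2, ht3⟩ := h1
    refine ⟨t, ht1, ht2, lt_of_le_of_lt (ENNReal.tsum_le_tsum fun n => ?_) ht3⟩
    rcases (t n).eq_empty_or_nonempty with h | h
    · simp [h]
    · simp [h]
  choose t ht1 ht2 ht3 using hcov
  set f : X → ℝ := fun z => dist z p with hf
  have hl : LipschitzWith 1 f := LipschitzWith.dist_left p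
  set N : ℕ → ℝ → ℝ≥0∞ := fun k x => ∑' i, (closure (f '' t k i)).indicator 1 x with hN
  have hNm : ∀ k, Measurable (N k) := fun k => Measurable.tsum fun i =>
    measurable_one.indicator isClosed_closure.measurableSet
  have hNi : ∀ k, ∫⁻ x in Ioo a b, N k x ≤ c := by
    intro k
    refine (setLIntegral_le_lintegral _ _).trans ?_
    rw [hN, lintegral_tsum fun i =>
      (measurable_one.indicator isClosed_closure.measurableSet).aemeasurable]
    refine le_trans (ENNReal.tsum_le_tsum fun i => ?_) (ht3 k).le
    rw [lintegral_indicator_one isClosed_closure.measurableSet]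
    refine (Real.volume_le_diam _).trans ?_
    rw [ediam_closure]
    simpa using hl.ediam_image_le (t k i)
  have hlim : ∀ x ∈ Ioo a b, ((M + 1 : ℕ) : ℝ≥0∞) ≤ liminf (fun k => N k x) atTop := by
    intro x hx
    have h1 := hcon x hx
    have h2 : ((M + 1 : ℕ) : ℕ∞) ≤ (K ∩ sphere p x).encard := by
      push_cast
      exact Order.add_one_le_of_lt h1
    obtain ⟨G, hG, hGc⟩ := exists_subset_encard_eq h2
    have hGf : G.Finite := finite_of_encard_eq_coe hGc
    have hpos : 0 < G.einfsep := hGf.einfsep_pos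
    have htend : Tendsto (fun k : ℕ => ((k : ℝ≥0∞) + 1)⁻¹) atTop (𝓝 0) := by
      have := (tendsto_add_atTop_iff_nat 1).2 ENNReal.tendsto_inv_nat_nhds_zero
      simpa using this
    refine le_liminf_of_le (by isBoundedDefault) ?_
    filter_upwards [htend.eventually (gt_mem_nhds hpos)] with k hk
    have hch : ∀ z ∈ G, ∃ i, z ∈ t k i := fun z hz => mem_iUnion.1 (ht1 k (hG hz).1)
    choose! j hj using hch
    have hinj : InjOn j G := by
      intro z hz w hw hzw
      by_contra hne
      have e1 : edist z w ≤ ((k : ℝ≥0∞) + 1)⁻¹ :=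
        (edist_le_ediam_of_mem (hj z hz) (hzw ▸ hj w hw)).trans (ht2 k _)
      have e2 : G.einfsep ≤ edist z w := einfsep_le_edist_of_mem hz hw hne
      exact absurd (e2.trans e1) (not_le.2 hk)
    have hcard : hGf.toFinset.card = M + 1 := by
      rw [← Nat.cast_inj (R := ℕ∞), ← hGc, hGf.encard_eq_coe_toFinset_card]
    have hcard2 : (hGf.toFinset.image j).card = M + 1 := by
      rw [Finset.card_image_of_injOn (by simpa using hinj), hcard]
    calc ((M + 1 : ℕ) : ℝ≥0∞) = ∑ i ∈ hGf.toFinset.image j, 1 := by simp [hcard2]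
      _ ≤ ∑ i ∈ hGf.toFinset.image j, (closure (f '' t k i)).indicator 1 x := by
        refine Finset.sum_le_sum fun i hi => ?_
        obtain ⟨z, hz, rfl⟩ := Finset.mem_image.1 hi
        have hz' : z ∈ G := by simpa using hz
        have : x ∈ closure (f '' t k (j z)) :=
          subset_closure ⟨z, hj z hz', (hG hz').2⟩
        simp [this]
      _ ≤ N k x := ENNReal.sum_le_tsum _
  have hfin : ((M + 1 : ℕ) : ℝ≥0∞) * ENNReal.ofReal (b - a) ≤ c := by
    calc ((M + 1 : ℕ) : ℝ≥0∞) * ENNReal.ofReal (b - a)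
        = ∫⁻ x in Ioo a b, ((M + 1 : ℕ) : ℝ≥0∞) := by
          rw [setLIntegral_const, Real.volume_Ioo]
      _ ≤ ∫⁻ x in Ioo a b, liminf (fun k => N k x) atTop :=
          setLIntegral_mono' measurableSet_Ioo hlim
      _ ≤ liminf (fun k => ∫⁻ x in Ioo a b, N k x) atTop := lintegral_liminf_le hNm
      _ ≤ c := liminf_le_of_frequently_le' (Eventually.of_forall hNi).frequently
  exact absurd hfin (not_le.2 hc2)

open Classical in
theorem side {X : Type*} [MetricSpace X] [MeasurableSpace X] [BorelSpace X] (μ : Measure X)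
    {A G U : Set X} (hA : IsCompact A)
    (hAc : IsPreconnected A) (hG : IsClosed G) (hU : IsOpen U) (hUG : U ⊆ G) (hAG : ¬ A ⊆ G)
    (F : Finset X) (hF : ∀ x ∈ A, x ∈ G → x ∉ U → x ∈ F) :
    ∃ 𝒜 : Finset (Set X), 𝒜.card ≤ F.card ∧
      (∀ B ∈ 𝒜, IsCompact B ∧ IsConnected B ∧ B ⊆ A ∩ G) ∧
      (∀ x ∈ A ∩ G, ∃ B ∈ 𝒜, x ∈ B) ∧ ∑ B ∈ 𝒜, μ B ≤ μ (A ∩ G) := by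
  have hP : IsCompact (A ∩ G) := hA.inter_right hG
  have : CompactSpace ↥(A ∩ G) := isCompact_iff_compactSpace.1 hP
  set 𝒜 : Finset (Set X) := (F.filter (· ∈ A ∩ G)).image (connectedComponentIn (A ∩ G)) with h𝒜
  have hB : ∀ B ∈ 𝒜, IsCompact B ∧ IsConnected B ∧ B ⊆ A ∩ G := by
    intro B hB
    obtain ⟨x, hx, rfl⟩ := Finset.mem_image.1 hB
    have hx' := (Finset.mem_filter.1 hx).2
    refine ⟨?_, isConnected_connectedComponentIn_iff.2 hx', connectedComponentIn_subset _ _⟩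
    rw [connectedComponentIn_eq_image hx']
    exact isClosed_connectedComponent.isCompact.image continuous_subtype_val
  refine ⟨𝒜, Finset.card_image_le.trans (Finset.card_filter_le _ _), hB, ?_, ?_⟩
  · intro x hx
    obtain ⟨z, hz, hzU⟩ := bump hA hAc hG hU hUG hAG hx
    have hz' := connectedComponentIn_subset _ _ hz
    refine ⟨connectedComponentIn (A ∩ G) z, Finset.mem_image.2
      ⟨z, Finset.mem_filter.2 ⟨hF z hz'.1 hz'.2 hzU, hz'⟩, rfl⟩, ?_⟩
    rw [← connectedComponentIn_eq hz]
    exact mem_connectedComponentIn hx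
  · rw [← measure_biUnion_finset (f := fun B => B)]
    · exact measure_mono (iUnion₂_subset fun B h => (hB B h).2.2)
    · intro B hB1 B' hB2 hne
      obtain ⟨x, hx, rfl⟩ := Finset.mem_image.1 hB1
      obtain ⟨x', hx', rfl⟩ := Finset.mem_image.1 hB2
      refine disjoint_left.2 fun z hz hz' => hne ?_
      rw [connectedComponentIn_eq hz, connectedComponentIn_eq hz']
    · exact fun B h => (hB B h).1.isClosed.measurableSet

open Classical in
theorem split {X : Type*} [MetricSpace X] [MeasurableSpace X] [BorelSpace X] (μ : Measure X)
    [NullSingletonClass μ] {A : Set X} (hA : IsCompact A) (hAc : IsConnected A) (p : X) (r : ℝ) (M : ℕ)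
    (hM : (A ∩ sphere p r).encard ≤ M) :
    ∃ 𝒜 : Finset (Set X), 𝒜.card ≤ 2 * M + 1 ∧
      (∀ B ∈ 𝒜, IsCompact B ∧ IsConnected B ∧ B ⊆ A ∧
        (B ⊆ closedBall p r ∨ Disjoint B (ball p r))) ∧
      (∀ x ∈ A, ∃ B ∈ 𝒜, x ∈ B) ∧ ∑ B ∈ 𝒜, μ B ≤ μ A := by
  by_cases h1 : A ⊆ closedBall p r
  · exact ⟨{A}, by simp, by simp [hA, hAc, h1], by simp, by simp⟩
  by_cases h2 : A ⊆ (ball p r)ᶜ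
  · exact ⟨{A}, by simp, by simp [hA, hAc, subset_compl_iff_disjoint_right.1 h2], by simp, by simp⟩
  have hfin : (A ∩ sphere p r).Finite := finite_of_encard_le_coe hM
  have hFc : hfin.toFinset.card ≤ M := by
    rw [hfin.encard_eq_coe_toFinset_card] at hM
    exact_mod_cast hM
  obtain ⟨𝒜, a1, a2, a3, a4⟩ := side μ hA hAc.isPreconnected isClosed_closedBall isOpen_ball
    ball_subset_closedBall h1 hfin.toFinset (by
      intro x hx hx1 hx2
      simp only [mem_closedBall, mem_ball, not_lt] at hx1 hx2
      simpa using ⟨hx, le_antisymm hx1 hx2⟩)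
  obtain ⟨ℬ, b1, b2, b3, b4⟩ := side μ hA hAc.isPreconnected (G := (ball p r)ᶜ)
    (U := (closedBall p r)ᶜ) isOpen_ball.isClosed_compl isClosed_closedBall.isOpen_compl
    (compl_subset_compl.2 ball_subset_closedBall) h2 hfin.toFinset (by
      intro x hx hx1 hx2
      simp only [mem_closedBall, mem_ball, mem_compl_iff, not_lt, not_not] at hx1 hx2
      simpa using ⟨hx, le_antisymm hx2 hx1⟩)
  refine ⟨𝒜 ∪ ℬ, (Finset.card_union_le _ _).trans (by omega), ?_, ?_, ?_⟩
  · intro B hB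
    rcases Finset.mem_union.1 hB with h | h
    · obtain ⟨h1, h2, h3⟩ := a2 B h
      exact ⟨h1, h2, h3.trans inter_subset_left, Or.inl (h3.trans inter_subset_right)⟩
    · obtain ⟨h1, h2, h3⟩ := b2 B h
      exact ⟨h1, h2, h3.trans inter_subset_left,
        Or.inr (subset_compl_iff_disjoint_right.1 (h3.trans inter_subset_right))⟩
  · intro x hx
    by_cases hxb : x ∈ ball p r
    · obtain ⟨B, hB, hxB⟩ := a3 x ⟨hx, ball_subset_closedBall hxb⟩
      exact ⟨B, Finset.mem_union_left _ hB, hxB⟩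
    · obtain ⟨B, hB, hxB⟩ := b3 x ⟨hx, hxb⟩
      exact ⟨B, Finset.mem_union_right _ hB, hxB⟩
  · have hnull : μ (A ∩ sphere p r) = 0 := hfin.measure_zero μ
    have e1 : μ (A ∩ closedBall p r) ≤ μ (A ∩ ball p r) := by
      have : A ∩ closedBall p r ⊆ (A ∩ ball p r) ∪ (A ∩ sphere p r) := by
        rw [← inter_union_distrib_left, ball_union_sphere]
      refine (measure_mono this).trans ((measure_union_le _ _).trans ?_)
      rw [hnull, add_zero]
    calc ∑ B ∈ 𝒜 ∪ ℬ, μ B ≤ ∑ B ∈ 𝒜, μ B + ∑ B ∈ ℬ, μ B := by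
          rw [← Finset.sum_union_inter]; exact le_self_add
      _ ≤ μ (A ∩ ball p r) + μ (A ∩ (ball p r)ᶜ) := add_le_add (a4.trans e1) b4
      _ = μ A := by rw [← diff_eq]; exact measure_inter_add_diff A isOpen_ball.measurableSet

theorem sum_biUnion_le' {ι α : Type*} [DecidableEq α] (s : Finset ι) (g : ι → Finset α)
    (f : α → ℝ≥0∞) : ∑ x ∈ s.biUnion g, f x ≤ ∑ i ∈ s, ∑ x ∈ g i, f x := by
  classical
  induction s using Finset.induction_on with
  | empty => simp
  | insert a s ha ih =>
    rw [Finset.biUnion_insert, Finset.sum_insert ha]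
    refine le_trans ?_ (add_le_add le_rfl ih)
    rw [← Finset.sum_union_inter]; exact le_self_add

open Classical in
theorem multisplit {X : Type*} [MetricSpace X] [MeasurableSpace X] [BorelSpace X] (μ : Measure X)
    [NullSingletonClass μ] (M : ℕ) (r : X → ℝ) (t : Finset X) : ∀ {A : Set X}, IsCompact A → IsConnected A →
    (∀ p ∈ t, (A ∩ sphere p (r p)).encard ≤ M) →
    ∃ 𝒜 : Finset (Set X), 𝒜.card ≤ (2 * M + 1) ^ t.card ∧
      (∀ B ∈ 𝒜, IsCompact B ∧ IsConnected B ∧ B ⊆ A ∧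
        ∀ p ∈ t, (B ⊆ closedBall p (r p) ∨ Disjoint B (ball p (r p)))) ∧
      (∀ x ∈ A, ∃ B ∈ 𝒜, x ∈ B) ∧ ∑ B ∈ 𝒜, μ B ≤ μ A := by
  induction t using Finset.induction_on with
  | empty =>
    intro A hA hAc _
    exact ⟨{A}, by simp, by simp [hA, hAc], by simp, by simp⟩
  | insert q t hq ih =>
    intro A hA hAc hs
    obtain ⟨𝒜, a1, a2, a3, a4⟩ := split μ hA hAc q (r q) M (hs q (Finset.mem_insert_self _ _))
    have hch : ∀ B ∈ 𝒜, _ := fun B hB => ih (A := B) (a2 B hB).1 (a2 B hB).2.1 (fun p hp =>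
      (encard_le_encard (inter_subset_inter_left _ (a2 B hB).2.2.1)).trans
        (hs p (Finset.mem_insert_of_mem hp)))
    choose! g g1 g2 g3 g4 using hch
    refine ⟨𝒜.biUnion g, ?_, ?_, ?_, ?_⟩
    · refine (Finset.card_biUnion_le_card_mul _ _ _ g1).trans ?_
      rw [Finset.card_insert_of_notMem hq, pow_succ']
      exact Nat.mul_le_mul_right _ a1
    · intro B hB
      obtain ⟨D, hD, hBD⟩ := Finset.mem_biUnion.1 hB
      obtain ⟨h1, h2, h3, h4⟩ := g2 D hD B hBD
      obtain ⟨k1, k2, k3, k4⟩ := a2 D hD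
      refine ⟨h1, h2, h3.trans k3, fun p hp => ?_⟩
      rcases Finset.mem_insert.1 hp with rfl | hp
      · exact k4.imp h3.trans (fun h => h.mono_left h3)
      · exact h4 p hp
    · intro x hx
      obtain ⟨D, hD, hxD⟩ := a3 x hx
      obtain ⟨B, hB, hxB⟩ := g3 D hD x hxD
      exact ⟨B, Finset.mem_biUnion.2 ⟨D, hD, hB⟩, hxB⟩
    · exact (sum_biUnion_le' _ _ _).trans ((Finset.sum_le_sum g4).trans a4)

/-- Continua of bounded length in a fixed compact set can be cut into a bounded number of
small pieces, the diameters of which add up to at most the length. -/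
theorem key {X : Type*} [MetricSpace X] [MeasurableSpace X] [BorelSpace X] {B : Set X}
    (hB : IsCompact B) {L : ℝ≥0∞} (hL : L < ⊤) {δ : ℝ} (hδ : 0 < δ) :
    ∃ N : ℕ, ∀ K ⊆ B, IsCompact K → IsConnected K → Measure.hausdorffMeasure 1 K ≤ L →
      ∃ 𝒜 : Finset (Set X), 𝒜.card ≤ N ∧ (∀ A ∈ 𝒜, ediam A ≤ ENNReal.ofReal δ) ∧
        (∀ x ∈ K, ∃ A ∈ 𝒜, x ∈ A) ∧ ∑ A ∈ 𝒜, ediam A ≤ Measure.hausdorffMeasure 1 K := by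
  obtain ⟨t, _, htf, hcov⟩ := hB.finite_cover_balls (half_pos (half_pos hδ))
  have hd : ENNReal.ofReal (δ / 2 - δ / 2 / 2) ≠ 0 := by
    simp only [ne_eq, ENNReal.ofReal_eq_zero, not_le]; linarith
  obtain ⟨M, hM⟩ := ENNReal.exists_nat_mul_gt hd hL.ne
  have : NullSingletonClass (Measure.hausdorffMeasure 1 : Measure X) :=
    Measure.nullSingletonClass_hausdorff X one_pos
  refine ⟨(2 * M + 1) ^ htf.toFinset.card, fun K hKB hK hKc hKL => ?_⟩
  have hr : ∀ p : X, ∃ r ∈ Ioo (δ / 2 / 2) (δ / 2), (K ∩ sphere p r).encard ≤ M := fun p =>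
    eilenberg p M (hKL.trans_lt (hM.trans_le (by gcongr; simp)))
  choose r hr1 hr2 using hr
  obtain ⟨𝒜, h1, h2, h3, h4⟩ := multisplit (Measure.hausdorffMeasure 1) M r htf.toFinset hK hKc
    (fun p _ => hr2 p)
  refine ⟨𝒜, h1, fun A hA => ?_, h3, (Finset.sum_le_sum fun A hA =>
    ediam_le_hausdorff (h2 A hA).2.1.isPreconnected).trans h4⟩
  obtain ⟨_, k2, k3, k4⟩ := h2 A hA
  obtain ⟨x, hx⟩ := k2.nonempty
  obtain ⟨p, hp, hxp⟩ := mem_iUnion₂.1 (hcov (hKB (k3 hx)))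
  have hsub : A ⊆ closedBall p (r p) := by
    refine (k4 p (by simpa using hp)).resolve_right fun hdis => ?_
    exact disjoint_left.1 hdis hx (ball_subset_ball (hr1 p).1.le hxp)
  refine Metric.ediam_le fun y hy z hz => ?_
  rw [edist_dist]
  refine ENNReal.ofReal_le_ofReal ?_
  have e1 := mem_closedBall.1 (hsub hy)
  have e2 := mem_closedBall.1 (hsub hz)
  have := dist_triangle_right y z p
  linarith [(hr1 p).2]

/-- Golab semicontinuity, for sequences inside a fixed compact set. -/
theorem golab {X : Type*} [MetricSpace X] [MeasurableSpace X] [BorelSpace X] {B : Set X}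
    (hB : IsCompact B) {L : ℝ≥0∞} (hL : L < ⊤) {C : Set X}
    (h : ∀ η > 0, ∃ K ⊆ B, IsCompact K ∧ IsConnected K ∧
      Measure.hausdorffMeasure 1 K ≤ L + ENNReal.ofReal η ∧ C ⊆ thickening η K) :
    Measure.hausdorffMeasure 1 C ≤ L := by
  have step : ∀ k : ℕ, ∃ 𝒜 : Finset (Set X),
      (∀ A : 𝒜, ediam (A : Set X) ≤ ENNReal.ofReal (3 * (1 / ((k : ℝ) + 1)))) ∧
      (C ⊆ ⋃ A : 𝒜, (A : Set X)) ∧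
      ∑ A : 𝒜, ediam (A : Set X) ^ (1 : ℝ) ≤ L + ENNReal.ofReal (3 * (1 / ((k : ℝ) + 1))) := by
    classical
    intro k
    set δ : ℝ := 1 / ((k : ℝ) + 1) with hδdef
    have hδ : 0 < δ := by positivity
    obtain ⟨N, hN⟩ := key hB (L := L + ENNReal.ofReal δ)
      (ENNReal.add_lt_top.2 ⟨hL, ENNReal.ofReal_lt_top⟩) hδ
    set η : ℝ := δ / (N + 1) with hη
    have hηpos : 0 < η := by positivity
    have hηN : N * η ≤ δ := by
      rw [hη, mul_div_assoc', div_le_iff₀ (by positivity)]; nlinarith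
    have hηδ : η ≤ δ := div_le_self hδ.le (by linarith [(Nat.cast_nonneg N : (0:ℝ) ≤ N)])
    obtain ⟨K, hKB, hK, hKc, hKL, hCK⟩ := h η hηpos
    obtain ⟨𝒜, h1, h2, h3, h4⟩ := hN K hKB hK hKc
      (hKL.trans (by gcongr))
    have hth : ∀ A : Set X, ediam (thickening η A) ≤ ediam A + ENNReal.ofReal (2 * η) := by
      intro A
      have := ediam_thickening_le (s := A) (⟨η, hηpos.le⟩ : ℝ≥0)
      refine this.trans (le_of_eq ?_)
      rw [ENNReal.ofReal_mul (by norm_num), ENNReal.ofReal_eq_coe_nnreal hηpos.le]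
      simp
      rfl
    refine ⟨𝒜.image (thickening η), ?_, ?_, ?_⟩
    · rintro ⟨A', hA'⟩
      obtain ⟨A, hA, rfl⟩ := Finset.mem_image.1 hA'
      refine (hth A).trans ((add_le_add (h2 A hA) le_rfl).trans ?_)
      rw [← ENNReal.ofReal_add hδ.le (by positivity)]
      exact ENNReal.ofReal_le_ofReal (by linarith)
    · intro x hx
      obtain ⟨z, hz, hxz⟩ := mem_thickening_iff.1 (hCK hx)
      obtain ⟨A, hA, hzA⟩ := h3 z hz
      exact mem_iUnion.2 ⟨⟨thickening η A, Finset.mem_image_of_mem _ hA⟩,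
        mem_thickening_iff.2 ⟨z, hzA, hxz⟩⟩
    · simp only [ENNReal.rpow_one]
      rw [Finset.sum_coe_sort (𝒜.image (thickening η)) (fun A => ediam A)]
      calc ∑ A ∈ 𝒜.image (thickening η), ediam A
          ≤ ∑ A ∈ 𝒜, ediam (thickening η A) := by
            rw [← Finset.biUnion_singleton]
            refine (sum_biUnion_le' _ _ _).trans ?_
            simp
        _ ≤ ∑ A ∈ 𝒜, (ediam A + ENNReal.ofReal (2 * η)) := Finset.sum_le_sum fun A _ => hth A
        _ = ∑ A ∈ 𝒜, ediam A + 𝒜.card * ENNReal.ofReal (2 * η) := by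
            rw [Finset.sum_add_distrib, Finset.sum_const, nsmul_eq_mul]
        _ ≤ (L + ENNReal.ofReal η) + N * ENNReal.ofReal (2 * η) := by
            gcongr
            exact h4.trans hKL
        _ = L + ENNReal.ofReal (η + N * (2 * η)) := by
            rw [ENNReal.ofReal_add hηpos.le (by positivity), ENNReal.ofReal_mul (Nat.cast_nonneg N),
              ENNReal.ofReal_natCast, add_assoc]
        _ ≤ L + ENNReal.ofReal (3 * δ) := by
            gcongr
            linarith
  choose 𝒜 h1 h2 h3 using step
  have ht : Tendsto (fun k : ℕ => ENNReal.ofReal (3 * (1 / ((k : ℝ) + 1)))) atTop (𝓝 0) := by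
    have := (tendsto_one_div_add_atTop_nhds_zero_nat (𝕜 := ℝ)).const_mul 3
    simpa using ENNReal.tendsto_ofReal this
  refine (Measure.hausdorffMeasure_le_liminf_sum (ι := fun k => 𝒜 k) 1 C _ ht
    (fun k A => (A : Set X)) (Eventually.of_forall h1) (Eventually.of_forall h2)).trans ?_
  have ht2 := (tendsto_const_nhds (x := L)).add ht
  rw [add_zero] at ht2
  refine (liminf_le_liminf (Eventually.of_forall h3)).trans ?_
  rw [ht2.liminf_eq]

theorem blaschke {X : Type*} [MetricSpace X] {B : Set X} (hB : IsCompact B) (K : ℕ → Set X)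
    (hK : ∀ n, IsCompact (K n)) (hne : ∀ n, (K n).Nonempty) (hKB : ∀ n, K n ⊆ B) :
    ∃ C : Set X, IsCompact C ∧ C.Nonempty ∧ ∀ η > 0, ∃ᶠ n in atTop,
      K n ⊆ thickening η C ∧ C ⊆ thickening η (K n) := by
  have : CompactSpace B := isCompact_iff_compactSpace.1 hB
  set K' : ℕ → TopologicalSpace.NonemptyCompacts B := fun n =>
    ⟨⟨Subtype.val ⁻¹' K n, ((hK n).isClosed.preimage continuous_subtype_val).isCompact⟩, by
      obtain ⟨x, hx⟩ := hne n
      exact ⟨⟨x, hKB n hx⟩, hx⟩⟩ with hK'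
  obtain ⟨C', -, φ, hφ, hlim⟩ := isCompact_univ.tendsto_subseq (x := K') (fun _ => mem_univ _)
  refine ⟨Subtype.val '' (C' : Set B), C'.isCompact.image continuous_subtype_val,
    C'.nonempty.image _, fun η hη => ?_⟩
  have hev := Metric.tendsto_nhds.1 hlim η hη
  refine hφ.tendsto_atTop.frequently (p := fun n => K n ⊆ thickening η (Subtype.val '' (C' : Set B))
    ∧ Subtype.val '' (C' : Set B) ⊆ thickening η (K n)) (Eventually.frequently ?_)
  filter_upwards [hev] with n hn
  rw [Metric.NonemptyCompacts.dist_eq] at hn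
  have hne' : hausdorffEDist (K' (φ n) : Set B) (C' : Set B) ≠ ⊤ :=
    hausdorffEDist_ne_top_of_nonempty_of_bounded (K' (φ n)).nonempty C'.nonempty
      (K' (φ n)).isCompact.isBounded C'.isCompact.isBounded
  constructor
  · intro x hx
    obtain ⟨y, hy, hxy⟩ := exists_dist_lt_of_hausdorffDist_lt
      (x := (⟨x, hKB _ hx⟩ : B)) (s := (K' (φ n) : Set B)) hx hn hne'
    exact mem_thickening_iff.2 ⟨y, ⟨y, hy, rfl⟩, hxy⟩
  · rintro _ ⟨y, hy, rfl⟩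
    obtain ⟨x, hx, hxy⟩ := exists_dist_lt_of_hausdorffDist_lt' hy hn hne'
    exact mem_thickening_iff.2 ⟨x, hx, by rwa [dist_comm]⟩

end RelSteinerAux

/-- **Relative Steiner realization.** Let `X` be a proper metric space and `S ⊆ X` a
nonempty compact subset with `St(S,X) < ∞`. Then the infimum is attained: there is a
continuum `C ⊆ X` with `C ∪ S` a continuum and `H¹(C) = St(S,X)`. -/
theorem relSteiner_realized (X : Type*) [MetricSpace X] [ProperSpace X]
    (S : Set X) (hS : IsCompact S) (hne : S.Nonempty)
    (hfin : relSteiner X S < ⊤) :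
    ∃ C : Set X, IsCompact C ∧ IsConnected C ∧
      IsCompact (C ∪ S) ∧ IsConnected (C ∪ S) ∧ H1 X C = relSteiner X S := by
  letI : MeasurableSpace X := borel X
  haveI : BorelSpace X := ⟨rfl⟩
  have hH : ∀ A : Set X, H1 X A = Measure.hausdorffMeasure 1 A := fun A => rfl
  set L := relSteiner X S with hL
  have hseq : ∀ n : ℕ, ∃ C : Set X, IsCompact C ∧ IsConnected C ∧ IsCompact (C ∪ S) ∧
      IsConnected (C ∪ S) ∧ H1 X C ≤ L + ENNReal.ofReal (1 / ((n : ℝ) + 1)) := by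
    intro n
    have hlt : L < L + ENNReal.ofReal (1 / ((n : ℝ) + 1)) :=
      ENNReal.lt_add_right hfin.ne (by
        simp only [ne_eq, ENNReal.ofReal_eq_zero, not_le]; positivity)
    obtain ⟨_, ⟨C, h1, h2, h3, h4, rfl⟩, hr⟩ := sInf_lt_iff.1 hlt
    exact ⟨C, h1, h2, h3, h4, hr.le⟩
  choose K k1 k2 k3 k4 k5 using hseq
  set R : ℝ := L.toReal + 1 with hR
  have hRL : ENNReal.ofReal R = L + 1 := by
    rw [hR, ENNReal.ofReal_add ENNReal.toReal_nonneg zero_le_one, ENNReal.ofReal_toReal hfin.ne,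
      ENNReal.ofReal_one]
  have hBc : IsCompact (cthickening R S) := hS.cthickening
  have hKB : ∀ n, K n ⊆ cthickening R S := by
    intro n x hx
    obtain ⟨s, -, hs1, hs2⟩ := isPreconnected_closed_iff.1 (k4 n).isPreconnected (K n) S
      (k1 n).isClosed hS.isClosed subset_rfl
      ((k2 n).nonempty.mono fun y hy => ⟨Or.inl hy, hy⟩) (hne.mono fun y hy => ⟨Or.inr hy, hy⟩)
    refine mem_cthickening_of_edist_le x s R S hs2 ?_
    rw [hRL]
    refine (edist_le_ediam_of_mem hx hs1).trans
      ((RelSteinerAux.ediam_le_hausdorff (k2 n).isPreconnected).trans ((k5 n).trans ?_))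
    gcongr
    rw [← ENNReal.ofReal_one]
    refine ENNReal.ofReal_le_ofReal ?_
    rw [div_le_one (by positivity)]
    linarith [(Nat.cast_nonneg n : (0:ℝ) ≤ n)]
  obtain ⟨C, hC, hCne, hlim⟩ := RelSteinerAux.blaschke hBc K k1 (fun n => (k2 n).nonempty) hKB
  have hCc : IsConnected C := ⟨hCne, RelSteinerAux.isPreconnected_limit hC fun η hη => by
    obtain ⟨n, h1, h2⟩ := (hlim η hη).exists
    exact ⟨K n, (k2 n).isPreconnected, h1, h2⟩⟩
  have hCS : IsConnected (C ∪ S) := ⟨hCne.mono Set.subset_union_left,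
    RelSteinerAux.isPreconnected_limit (hC.union hS) fun η hη => by
      obtain ⟨n, h1, h2⟩ := (hlim η hη).exists
      refine ⟨K n ∪ S, (k4 n).isPreconnected, ?_, ?_⟩
      · rw [thickening_union]
        exact Set.union_subset_union h1 (self_subset_thickening hη _)
      · rw [thickening_union]
        exact Set.union_subset_union h2 (self_subset_thickening hη _)⟩
  refine ⟨C, hC, hCc, hC.union hS, hCS, le_antisymm ?_ ?_⟩
  · rw [hH]
    refine RelSteinerAux.golab hBc hfin fun η hη => ?_
    have hev : ∀ᶠ n : ℕ in Filter.atTop, 1 / ((n : ℝ) + 1) < η :=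
      (tendsto_one_div_add_atTop_nhds_zero_nat (𝕜 := ℝ)).eventually (gt_mem_nhds hη)
    obtain ⟨n, ⟨h1, h2⟩, h3⟩ := ((hlim η hη).and_eventually hev).exists
    refine ⟨K n, hKB n, k1 n, k2 n, (k5 n).trans ?_, h2⟩
    gcongr
  · exact sInf_le ⟨C, hC, hCc, hC.union hS, hCS, rfl⟩
end

section
/- (Main theorem) Let S be a compact metric space with finite absolute Steiner invariant St(S) < ∞. Then St(S) is realized: there exist a compact metric space Z, an isometric embedding ι : S → Z, and a continuum C ⊂ Z such that C ∪ ι(S) is a continuum and H^1(C) = St(S) = St(ι(S), Z). -/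
open Metric MeasureTheory
open scoped ENNReal NNReal

section Aux
open Set Filter Topology Metric MeasureTheory

theorem aux_ball_measure {X : Type*} [MetricSpace X] [MeasurableSpace X] [BorelSpace X]
    {C : Set X} (hC : IsPreconnected C) {x y : X} (hx : x ∈ C) (hy : y ∈ C) {r : ℝ}
    (hr : r ≤ dist x y) :
    ENNReal.ofReal r ≤ Measure.hausdorffMeasure 1 (C ∩ ball x r) := by
  have hsub : Ico 0 r ⊆ (fun z => dist z x) '' (C ∩ ball x r) := by
    intro t ht
    have hI := hC.image (fun z => dist z x) (by fun_prop)
    have h1 : (0 : ℝ) ∈ (fun z => dist z x) '' C := ⟨x, hx, dist_self x⟩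
    have h2 : dist y x ∈ (fun z => dist z x) '' C := ⟨y, hy, rfl⟩
    have h3 := hI.Icc_subset h1 h2
    obtain ⟨z, hz, hzt⟩ := h3 (show t ∈ Icc 0 (dist y x) from
      ⟨ht.1, by rw [dist_comm]; linarith [ht.2]⟩)
    simp only at hzt
    exact ⟨z, ⟨hz, by rw [mem_ball, hzt]; exact ht.2⟩, hzt⟩
  have hl : LipschitzWith 1 (fun z : X => dist z x) := LipschitzWith.dist_left x
  have h := hl.hausdorffMeasure_image_le (d := 1) zero_le_one (C ∩ ball x r)
  rw [hausdorffMeasure_real] at h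
  calc ENNReal.ofReal r = volume (Ico 0 r) := by simp
    _ ≤ _ := measure_mono hsub
    _ ≤ _ := h
    _ = _ := by simp

/-- Chains. -/
def auxChain {X : Type*} [MetricSpace X] (ε : ℝ) (x y : X) (n : ℕ) : Prop :=
  ∃ f : ℕ → X, f 0 = x ∧ f n = y ∧ ∀ i < n, dist (f i) (f (i + 1)) < ε

theorem auxChain_snoc {X : Type*} [MetricSpace X] {ε : ℝ} {x y z : X} {n : ℕ}
    (h : auxChain ε x y n) (hz : dist y z < ε) : auxChain ε x z (n + 1) := by
  obtain ⟨f, h0, hn, hf⟩ := h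
  refine ⟨fun i => if i ≤ n then f i else z, by simp [h0], by simp, ?_⟩
  intro i hi
  rcases Nat.lt_or_ge i n with h | h
  · simp [h.le, Nat.succ_le_of_lt h, hf i h]
  · have : i = n := by omega
    subst this
    simp [hn, hz]

theorem auxChain_exists {X : Type*} [MetricSpace X] [PreconnectedSpace X] {ε : ℝ} (hε : 0 < ε)
    (x y : X) : ∃ n, auxChain ε x y n := by
  have hcl : IsClopen {y : X | ∃ n, auxChain ε x y n} := by
    constructor
    · rw [← isOpen_compl_iff, Metric.isOpen_iff]
      intro y hy
      refine ⟨ε, hε, fun z hz hz' => hy ?_⟩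
      obtain ⟨n, hn⟩ := hz'
      exact ⟨n + 1, auxChain_snoc hn hz⟩
    · rw [Metric.isOpen_iff]
      rintro y ⟨n, hn⟩
      exact ⟨ε, hε, fun z hz => ⟨n + 1, auxChain_snoc hn (by rw [dist_comm]; exact hz)⟩⟩
  have := hcl.eq_univ ⟨x, 0, fun _ => x, rfl, rfl, by simp⟩
  have hy : y ∈ {y : X | ∃ n, auxChain ε x y n} := this ▸ mem_univ y
  exact hy

theorem auxChain_short {X : Type*} [MetricSpace X] [PreconnectedSpace X] {ε : ℝ} (hε : 0 < ε)
    (x y : X) : ∃ (n : ℕ) (f : ℕ → X), f 0 = x ∧ f n = y ∧ (∀ i < n, dist (f i) (f (i + 1)) < ε) ∧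
      ∀ i j, i + 2 ≤ j → j ≤ n → ε ≤ dist (f i) (f j) := by
  classical
  have hex := auxChain_exists hε x y
  obtain ⟨f, h0, hn, hf⟩ := Nat.find_spec hex
  refine ⟨Nat.find hex, f, h0, hn, hf, ?_⟩
  intro i j hij hjn
  by_contra! hlt
  set n := Nat.find hex with hn'
  refine Nat.find_min hex (m := n - (j - i - 1)) (by omega)
    ⟨fun k => if k ≤ i then f k else f (k + (j - i - 1)), by simp [h0], ?_, ?_⟩
  · have h1 : ¬ (n - (j - i - 1) ≤ i) := by omega
    have h2 : n - (j - i - 1) + (j - i - 1) = n := by omega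
    simp only [h1, if_false, h2, hn]
  · intro k hk
    rcases lt_trichotomy k i with h | h | h
    · simp only [h.le, Nat.succ_le_of_lt h, if_true]
      exact hf k (by omega)
    · subst h
      have h1 : ¬ (k + 1 ≤ k) := by omega
      have h2 : k + 1 + (j - k - 1) = j := by omega
      simp only [le_refl, if_true, h1, if_false, h2]
      exact hlt
    · have h1 : ¬ (k + 1 ≤ i) := by omega
      have h2 : ¬ (k ≤ i) := by omega
      have h3 : k + 1 + (j - i - 1) = k + (j - i - 1) + 1 := by omega
      simp only [h1, h2, if_false, h3]
      exact hf _ (by omega)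

theorem auxChain_bound {X : Type*} [MetricSpace X] [MeasurableSpace X] [BorelSpace X]
    [PreconnectedSpace X] (hfin : Measure.hausdorffMeasure 1 (univ : Set X) ≠ ⊤)
    {ε : ℝ} (hε : 0 < ε) (x y : X) :
    ∃ (n : ℕ) (f : ℕ → X), f 0 = x ∧ f n = y ∧ (∀ i < n, dist (f i) (f (i + 1)) < ε) ∧
      n * ε ≤ 4 * (Measure.hausdorffMeasure 1 (univ : Set X)).toReal + ε := by
  obtain ⟨n, f, h0, hn, hf, hsep⟩ := auxChain_short hε x y
  refine ⟨n, f, h0, hn, hf, ?_⟩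
  set M := (Measure.hausdorffMeasure 1 (univ : Set X)).toReal with hM
  have hM0 : 0 ≤ M := ENNReal.toReal_nonneg
  rcases Nat.lt_or_ge n 2 with h2 | h2
  · have : (n : ℝ) ≤ 1 := by exact_mod_cast (by omega : n ≤ 1)
    nlinarith
  have hsep' : ∀ i ∈ Finset.range (n / 2 + 1), ∀ j ∈ Finset.range (n / 2 + 1), i ≠ j →
      ε ≤ dist (f (2 * i)) (f (2 * j)) := by
    intro i hi j hj hij
    simp only [Finset.mem_range] at hi hj
    rcases lt_or_gt_of_ne hij with h | h
    · exact hsep _ _ (by omega) (by omega)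
    · rw [dist_comm]; exact hsep _ _ (by omega) (by omega)
  have hmeas : ∀ i ∈ Finset.range (n / 2 + 1), ENNReal.ofReal (ε / 2) ≤
      Measure.hausdorffMeasure 1 (ball (f (2 * i)) (ε / 2)) := by
    intro i hi
    obtain ⟨j, hj, hij⟩ : ∃ j ∈ Finset.range (n / 2 + 1), i ≠ j := by
      rcases Nat.eq_zero_or_pos i with h | h
      · exact ⟨1, by simp; omega, by omega⟩
      · exact ⟨0, by simp, by omega⟩
    have := aux_ball_measure (isPreconnected_univ (α := X)) (mem_univ (f (2 * i)))
      (mem_univ (f (2 * j))) (r := ε / 2) (by linarith [hsep' i hi j hj hij])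
    simpa using this
  have hsum : ∑ i ∈ Finset.range (n / 2 + 1),
      Measure.hausdorffMeasure 1 (ball (f (2 * i)) (ε / 2)) ≤
      Measure.hausdorffMeasure 1 (univ : Set X) := by
    rw [← measure_biUnion_finset]
    · exact measure_mono (subset_univ _)
    · intro i hi j hj hij
      exact ball_disjoint_ball (by linarith [hsep' i hi j hj hij])
    · intro i _
      exact measurableSet_ball
  have h3 := (Finset.sum_le_sum hmeas).trans hsum
  rw [Finset.sum_const, Finset.card_range, nsmul_eq_mul, ← ENNReal.ofReal_natCast,
    ← ENNReal.ofReal_mul (by positivity), ENNReal.ofReal_le_iff_le_toReal hfin] at h3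
  have h4 : (n : ℝ) / 2 ≤ ((n / 2 + 1 : ℕ) : ℝ) := by
    have : (n : ℝ) ≤ ((2 * (n / 2 + 1) : ℕ) : ℝ) := by exact_mod_cast (by omega)
    push_cast at this ⊢
    linarith
  nlinarith

theorem aux_ulim {X : Type*} [TopologicalSpace X] [CompactSpace X] (u : ℕ → X) :
    ∃ x, Tendsto u (hyperfilter ℕ : Filter ℕ) (𝓝 x) := by
  obtain ⟨x, -, hx⟩ := (isCompact_univ (X := X)).ultrafilter_le_nhds
    ((hyperfilter ℕ).map u) (by simp)
  exact ⟨x, hx⟩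

theorem aux_hyper_le : (hyperfilter ℕ : Filter ℕ) ≤ atTop := by
  rw [← Nat.cofinite_eq_atTop]; exact hyperfilter_le_cofinite

theorem aux_chain_dist {X : Type*} [MetricSpace X] {ε : ℝ} {f : ℕ → X} {n : ℕ}
    (hf : ∀ i < n, dist (f i) (f (i + 1)) < ε) {a b : ℕ} (hab : a ≤ b) (hb : b ≤ n) :
    dist (f a) (f b) ≤ (b - a : ℝ) * ε := by
  induction b, hab using Nat.le_induction with
  | base => simp
  | succ b hab ih =>
    have h1 := ih (by omega)
    have h2 := hf b (by omega)
    have := dist_triangle (f a) (f b) (f (b + 1))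
    push_cast
    linarith

/-- Any two points in a finite-length continuum are joined by a Lipschitz curve. -/
theorem aux_curve_exists {X : Type*} [MetricSpace X] [MeasurableSpace X] [BorelSpace X]
    [CompactSpace X] [PreconnectedSpace X]
    (hfin : Measure.hausdorffMeasure 1 (univ : Set X) ≠ ⊤) (x y : X) :
    ∃ (K : ℝ) (γ : ℝ → X), 0 ≤ K ∧ γ 0 = x ∧ γ 1 = y ∧
      ∀ s t, 0 ≤ s → s ≤ t → t ≤ 1 → dist (γ s) (γ t) ≤ K * (t - s) := by
  set M := (Measure.hausdorffMeasure 1 (univ : Set X)).toReal with hM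
  have hM0 : 0 ≤ M := ENNReal.toReal_nonneg
  have hε : ∀ k : ℕ, (0 : ℝ) < 1 / ((k : ℝ) + 1) := fun k => by positivity
  choose n f h0 h1 hf hn using fun k : ℕ => auxChain_bound hfin (hε k) x y
  choose γ hγ using fun t : ℝ => aux_ulim (fun k => f k ⌊t * n k⌋₊)
  have hlim : Tendsto (fun k : ℕ => 1 / ((k : ℝ) + 1)) (hyperfilter ℕ : Filter ℕ) (𝓝 0) :=
    tendsto_one_div_add_atTop_nhds_zero_nat.mono_left aux_hyper_le
  refine ⟨4 * M, γ, by positivity, ?_, ?_, ?_⟩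
  · refine tendsto_nhds_unique (hγ 0) ?_
    simp [h0]
  · refine tendsto_nhds_unique (hγ 1) ?_
    simp [h1]
  · intro s t hs hst ht
    have hb : Tendsto (fun k : ℕ => (4 * M + 1 / ((k : ℝ) + 1)) * (t - s) + 1 / ((k : ℝ) + 1))
        (hyperfilter ℕ : Filter ℕ) (𝓝 ((4 * M + 0) * (t - s) + 0)) :=
      ((tendsto_const_nhds.add hlim).mul_const _).add hlim
    rw [add_zero, add_zero] at hb
    refine le_of_tendsto_of_tendsto ((hγ s).dist (hγ t)) hb (Eventually.of_forall fun k => ?_)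
    have hnk : (0 : ℝ) ≤ n k := by positivity
    have ha : ⌊s * n k⌋₊ ≤ ⌊t * n k⌋₊ := Nat.floor_le_floor (by gcongr)
    have hb' : ⌊t * n k⌋₊ ≤ n k := by
      refine Nat.floor_le_of_le ?_
      nlinarith
    have h2 := aux_chain_dist (hf k) ha hb'
    have h3 : (⌊t * n k⌋₊ : ℝ) ≤ t * n k := Nat.floor_le (by nlinarith)
    have h4 : s * n k < ⌊s * n k⌋₊ + 1 := Nat.lt_floor_add_one _
    simp only
    have he := hε k
    set e := 1 / ((k : ℝ) + 1)
    have h5 : ((⌊t * n k⌋₊ : ℝ) - ⌊s * n k⌋₊) * e ≤ (t * n k - s * n k + 1) * e := by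
      gcongr; linarith
    have h6 : (n k * e) * (t - s) ≤ (4 * M + e) * (t - s) := by
      exact mul_le_mul_of_nonneg_right (hn k) (by linarith)
    linarith
end Aux
section Aux2
open Set Filter Topology Metric MeasureTheory

/-- There is a `K`-Lipschitz curve on `[0,1]` from `T` to `x`. -/
def auxCurve {X : Type*} [MetricSpace X] (T : Set X) (x : X) (K : ℝ) (γ : ℝ → X) : Prop :=
  γ 0 ∈ T ∧ γ 1 = x ∧ ∀ s t, 0 ≤ s → s ≤ t → t ≤ 1 → dist (γ s) (γ t) ≤ K * (t - s)

theorem auxCurve_reparam {X : Type*} [MetricSpace X] {T : Set X} {x : X} {γ : ℝ → X}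
    (h0 : γ 0 ∈ T) (h1 : γ 1 = x) {v : ℝ → ℝ} (hv : ContinuousOn v (Icc 0 1))
    (hd : ∀ s t, 0 ≤ s → s ≤ t → t ≤ 1 → dist (γ s) (γ t) ≤ v t - v s) :
    ∃ η, auxCurve T x (v 1 - v 0) η := by
  have hd' : ∀ s ∈ Icc (0 : ℝ) 1, ∀ t ∈ Icc (0 : ℝ) 1, dist (γ s) (γ t) ≤ |v t - v s| := by
    intro s hs t ht
    rcases le_total s t with h | h
    · exact (hd s t hs.1 h ht.2).trans (le_abs_self _)
    · rw [dist_comm, abs_sub_comm]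
      exact (hd t s ht.1 h hs.2).trans (le_abs_self _)
  have hV : 0 ≤ v 1 - v 0 := dist_nonneg.trans (hd 0 1 le_rfl zero_le_one le_rfl)
  have hw : ∀ u : ℝ, ∃ w ∈ Icc (0 : ℝ) 1, u ∈ Icc (0 : ℝ) 1 → v w = v 0 + u * (v 1 - v 0) := by
    intro u
    by_cases hu : u ∈ Icc (0 : ℝ) 1
    · obtain ⟨w, hw, hvw⟩ := intermediate_value_Icc zero_le_one hv
        (show v 0 + u * (v 1 - v 0) ∈ Icc (v 0) (v 1) from
          ⟨by nlinarith [hu.1], by nlinarith [hu.2]⟩)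
      exact ⟨w, hw, fun _ => hvw⟩
    · exact ⟨0, by simp, fun h => absurd h hu⟩
  choose w hw hvw using hw
  refine ⟨fun u => γ (w u), ?_, ?_, ?_⟩
  · have h := hd' (w 0) (hw 0) 0 (by simp)
    rw [hvw 0 (by simp)] at h
    have : dist (γ (w 0)) (γ 0) ≤ 0 := by simpa using h
    simpa only [dist_le_zero.1 this] using h0
  · have h := hd' (w 1) (hw 1) 1 (by simp)
    rw [hvw 1 (by simp)] at h
    have : dist (γ (w 1)) (γ 1) ≤ 0 := by simpa using h
    simpa only [dist_le_zero.1 this] using h1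
  · intro s t hs hst ht
    have h := hd' (w s) (hw s) (w t) (hw t)
    rw [hvw s ⟨hs, hst.trans ht⟩, hvw t ⟨hs.trans hst, ht⟩] at h
    refine h.trans (le_of_eq ?_)
    rw [abs_of_nonneg] <;> nlinarith

theorem auxCurve_nonneg {X : Type*} [MetricSpace X] {T : Set X} {x : X} {K : ℝ} {γ : ℝ → X}
    (h : auxCurve T x K γ) : 0 ≤ K := by
  have := h.2.2 0 1 le_rfl zero_le_one le_rfl
  have := dist_nonneg.trans this
  linarith

theorem auxCurve_min {X : Type*} [MetricSpace X] [MeasurableSpace X] [BorelSpace X]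
    [CompactSpace X] [PreconnectedSpace X]
    (hfin : Measure.hausdorffMeasure 1 (univ : Set X) ≠ ⊤) {T : Set X} (hT : IsClosed T)
    (hne : T.Nonempty) (x : X) :
    ∃ (K : ℝ) (γ : ℝ → X), auxCurve T x K γ ∧ ∀ K' γ', auxCurve T x K' γ' → K ≤ K' := by
  have hne' : {K : ℝ | ∃ γ, auxCurve T x K γ}.Nonempty := by
    obtain ⟨y, hy⟩ := hne
    obtain ⟨K, γ, -, h0, h1, h⟩ := aux_curve_exists hfin y x
    exact ⟨K, γ, h0 ▸ hy, h1, h⟩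
  have hbdd : BddBelow {K : ℝ | ∃ γ, auxCurve T x K γ} := by
    refine ⟨0, ?_⟩
    rintro K ⟨γ, h⟩
    exact auxCurve_nonneg h
  obtain ⟨K, -, hK, hKm⟩ := exists_seq_tendsto_sInf hne' hbdd
  choose g hg using hKm
  choose γ hγ using fun t : ℝ => aux_ulim (fun k => g k t)
  refine ⟨sInf {K : ℝ | ∃ γ, auxCurve T x K γ}, γ, ⟨?_, ?_, ?_⟩, fun K' γ' h =>
    csInf_le hbdd ⟨γ', h⟩⟩
  · exact hT.mem_of_tendsto (hγ 0) (Eventually.of_forall fun k => (hg k).1)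
  · refine tendsto_nhds_unique (hγ 1) ?_
    simp [fun k => (hg k).2.1]
  · intro s t hs hst ht
    exact le_of_tendsto_of_tendsto ((hγ s).dist (hγ t))
      ((hK.mono_left aux_hyper_le).mul_const (t - s))
      (Eventually.of_forall fun k => (hg k).2.2 s t hs hst ht)

theorem aux_lip {X : Type*} [MetricSpace X] {K : ℝ} {γ : ℝ → X} (hK : 0 ≤ K)
    (h : ∀ s t, 0 ≤ s → s ≤ t → t ≤ 1 → dist (γ s) (γ t) ≤ K * (t - s)) :
    LipschitzOnWith K.toNNReal γ (Icc 0 1) := by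
  refine LipschitzOnWith.of_dist_le_mul fun s hs t ht => ?_
  rw [Real.coe_toNNReal _ hK]
  rcases le_total s t with hst | hst
  · rw [dist_comm s t, Real.dist_eq, abs_of_nonneg (by linarith)]
    exact h s t hs.1 hst ht.2
  · rw [dist_comm, Real.dist_eq, abs_of_nonneg (by linarith)]
    exact h t s ht.1 hst hs.2

theorem aux_measure_curve {X : Type*} [MetricSpace X] [MeasurableSpace X] [BorelSpace X]
    {K : ℝ} {γ : ℝ → X} (hK : 0 ≤ K)
    (h : ∀ s t, 0 ≤ s → s ≤ t → t ≤ 1 → dist (γ s) (γ t) ≤ K * (t - s)) {a b : ℝ}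
    (ha : 0 ≤ a) (hb : b ≤ 1) :
    Measure.hausdorffMeasure 1 (γ '' Icc a b) ≤ ENNReal.ofReal (K * (b - a)) := by
  have hl := (aux_lip hK h).mono (Icc_subset_Icc ha hb)
  have := hl.hausdorffMeasure_image_le (d := 1) zero_le_one
  rw [hausdorffMeasure_real, Real.volume_Icc, ENNReal.rpow_one] at this
  rwa [ENNReal.ofReal_mul hK]

theorem auxCurve_min_measure {X : Type*} [MetricSpace X] [MeasurableSpace X] [BorelSpace X]
    [CompactSpace X] [PreconnectedSpace X]
    (hfin : Measure.hausdorffMeasure 1 (univ : Set X) ≠ ⊤) {T : Set X} {x : X} (hx : x ∉ T)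
    {K : ℝ} {γ : ℝ → X} (hγ : auxCurve T x K γ) (hmin : ∀ K' γ', auxCurve T x K' γ' → K ≤ K') :
    ENNReal.ofReal K ≤ Measure.hausdorffMeasure 1 (γ '' Icc 0 1 \ T) := by
  have : NullSingletonClass (Measure.hausdorffMeasure 1 : Measure X) :=
    Measure.nullSingletonClass_hausdorff X one_pos
  obtain ⟨h0, h1, hL⟩ := hγ
  have hKpos : 0 < K := by
    have h := hL 0 1 le_rfl zero_le_one le_rfl
    have : γ 0 ≠ γ 1 := by
      intro h; apply hx; rw [← h1, ← h]; exact h0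
    have := dist_pos.2 this
    linarith
  -- meets `T` only at time zero
  have hT : ∀ t, 0 < t → t ≤ 1 → γ t ∉ T := by
    intro t ht0 ht1 htT
    have := hmin (K * (1 - t)) (fun u => γ (t + u * (1 - t))) ⟨by simpa using htT, by simp [h1], by
      intro s u hs hsu hu
      refine (hL _ _ (by nlinarith) (by nlinarith) (by nlinarith)).trans (le_of_eq ?_)
      ring⟩
    nlinarith
  -- injective
  have hinj : ∀ s t, 0 ≤ s → s < t → t ≤ 1 → γ s ≠ γ t := by
    intro s t hs hst ht heq
    obtain ⟨η, hη⟩ := auxCurve_reparam (T := T) (x := x)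
      (γ := fun u => γ (if u ≤ s then u else max u t))
      (v := fun u => K * (min u s + max u t)) (by simpa [hs] using h0) (by
        have : ¬ (1 ≤ s) := by linarith
        simp [this, ht, h1]) (by fun_prop) (by
        intro a b ha hab hb
        rcases le_or_gt b s with hbs | hbs
        · have has := hab.trans hbs
          simp only [hbs, has, if_true, min_eq_left, max_eq_right (hbs.trans hst.le),
            max_eq_right (has.trans hst.le)]
          linarith [hL a b ha hab hb]
        · have hbt : max b t ≤ 1 := max_le hb ht
          have htb : t ≤ max b t := le_max_right _ _
          simp only [not_le.2 hbs, if_false, min_eq_right hbs.le]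
          rcases le_or_gt a s with has | has
          · simp only [has, if_true, min_eq_left, max_eq_right (has.trans hst.le)]
            have e1 := hL a s ha has (by linarith)
            have e2 := hL t (max b t) (by linarith) htb hbt
            have e3 := dist_triangle (γ a) (γ s) (γ (max b t))
            rw [heq] at e1 e3
            linarith
          · simp only [not_le.2 has, if_false, min_eq_right has.le]
            have e1 := hL (max a t) (max b t) (le_max_of_le_left ha)
              (max_le_max hab le_rfl) hbt
            linarith)
    have := hmin _ _ hη
    rw [max_eq_left ht, min_eq_right (by linarith), min_eq_left hs,
      max_eq_right (by linarith)] at this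
    nlinarith
  have hmeasI : ∀ a b, 0 ≤ a → b ≤ 1 → MeasurableSet (γ '' Icc a b) := by
    intro a b ha hb
    exact (isCompact_Icc.image_of_continuousOn
      ((aux_lip hKpos.le hL).continuousOn.mono (Icc_subset_Icc ha hb))).isClosed.measurableSet
  have hne : ∀ A : Set X, Measure.hausdorffMeasure 1 A ≠ ⊤ := fun A =>
    ne_top_of_le_ne_top hfin (measure_mono (subset_univ A))
  have hadd : ∀ a b, 0 ≤ a → a ≤ b → b ≤ 1 →
      (Measure.hausdorffMeasure 1 (γ '' Icc 0 b)).toReal =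
      (Measure.hausdorffMeasure 1 (γ '' Icc 0 a)).toReal +
      (Measure.hausdorffMeasure 1 (γ '' Icc a b)).toReal := by
    intro a b ha hab hb
    rw [← ENNReal.toReal_add (hne _) (hne _), ← Icc_union_Icc_eq_Icc ha hab, image_union]
    congr 1
    refine measure_union₀' (hmeasI 0 a le_rfl (hab.trans hb)).nullMeasurableSet ?_
    refine measure_mono_null (t := {γ a}) ?_ (measure_singleton _)
    rintro _ ⟨⟨c, hc, rfl⟩, ⟨d, hd, hcd⟩⟩
    rcases (hc.2.trans hd.1).lt_or_eq with h | h
    · exact absurd hcd.symm (hinj c d hc.1 h (hd.2.trans hb))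
    · have : c = a := le_antisymm hc.2 (h ▸ hd.1)
      rw [this]; rfl
  have hlow : ∀ a b, 0 ≤ a → a ≤ b → b ≤ 1 → dist (γ a) (γ b) ≤
      (Measure.hausdorffMeasure 1 (γ '' Icc a b)).toReal := by
    intro a b ha hab hb
    rw [← ENNReal.ofReal_le_iff_le_toReal (hne _)]
    have hc : IsPreconnected (γ '' Icc a b) := isPreconnected_Icc.image _
      ((aux_lip hKpos.le hL).continuousOn.mono (Icc_subset_Icc ha hb))
    exact (aux_ball_measure hc (mem_image_of_mem _ (left_mem_Icc.2 hab))
      (mem_image_of_mem _ (right_mem_Icc.2 hab)) le_rfl).trans (measure_mono inter_subset_left)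
  have hup : ∀ a b, 0 ≤ a → a ≤ b → b ≤ 1 →
      (Measure.hausdorffMeasure 1 (γ '' Icc a b)).toReal ≤ K * (b - a) := by
    intro a b ha hab hb
    exact ENNReal.toReal_le_of_le_ofReal (by nlinarith) (aux_measure_curve hKpos.le hL ha hb)
  have hcont : ContinuousOn (fun t => (Measure.hausdorffMeasure 1 (γ '' Icc 0 t)).toReal)
      (Icc (0 : ℝ) 1) := by
    refine LipschitzOnWith.continuousOn (K := K.toNNReal) (aux_lip hKpos.le ?_)
    intro s t hs hst ht
    rw [dist_comm, Real.dist_eq, hadd s t hs hst ht, add_sub_cancel_left,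
      abs_of_nonneg ENNReal.toReal_nonneg]
    exact hup s t hs hst ht
  obtain ⟨η, hη⟩ := auxCurve_reparam (T := T) (x := x) h0 h1 hcont (by
    intro s t hs hst ht
    rw [hadd s t hs hst ht, add_sub_cancel_left]
    exact hlow s t hs hst ht)
  have hfinal := hmin _ _ hη
  simp only [Icc_self, image_singleton, measure_singleton, ENNReal.toReal_zero, sub_zero] at hfinal
  have hdiff : Measure.hausdorffMeasure 1 (γ '' Icc 0 1) ≤
      Measure.hausdorffMeasure 1 (γ '' Icc 0 1 \ T) := by
    calc Measure.hausdorffMeasure 1 (γ '' Icc 0 1)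
        ≤ Measure.hausdorffMeasure 1 ((γ '' Icc 0 1 \ T) ∪ {γ 0}) := by
          refine measure_mono ?_
          rintro _ ⟨c, hc, rfl⟩
          rcases hc.1.lt_or_eq with h | h
          · exact Or.inl ⟨mem_image_of_mem _ hc, hT c h hc.2⟩
          · rw [← h]; exact Or.inr rfl
      _ ≤ _ := measure_union_le _ _
      _ = _ := by simp
  refine le_trans ?_ hdiff
  exact (ENNReal.ofReal_le_iff_le_toReal (hne _)).2 hfinal

/-- One greedy step. -/
theorem aux_step {X : Type*} [MetricSpace X] [MeasurableSpace X] [BorelSpace X]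
    [CompactSpace X] [PreconnectedSpace X]
    (hfin : Measure.hausdorffMeasure 1 (univ : Set X) ≠ ⊤) {T : Set X} (hT : IsClosed T)
    (hne : T.Nonempty) :
    ∃ (K : ℝ) (γ : ℝ → X), 0 ≤ K ∧ γ 0 ∈ T ∧
      (∀ s t, 0 ≤ s → s ≤ t → t ≤ 1 → dist (γ s) (γ t) ≤ K * (t - s)) ∧
      (∀ y, infDist y T ≤ K) ∧
      ENNReal.ofReal K ≤ Measure.hausdorffMeasure 1 (γ '' Icc 0 1 \ T) := by
  obtain ⟨x, -, hx⟩ := (isCompact_univ (X := X)).exists_isMaxOn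
    (hne.mono (subset_univ _)) (continuous_infDist_pt T).continuousOn
  have hx' : ∀ y, infDist y T ≤ infDist x T := fun y => hx (mem_univ y)
  by_cases hxT : x ∈ T
  · refine ⟨0, fun _ => x, le_rfl, hxT, by simp, fun y => ?_, by simp⟩
    rw [← infDist_zero_of_mem hxT]; exact hx' y
  · obtain ⟨K, γ, hγ, hmin⟩ := auxCurve_min hfin hT hne x
    refine ⟨K, γ, auxCurve_nonneg hγ, hγ.1, hγ.2.2, fun y => ?_,
      auxCurve_min_measure hfin hxT hγ hmin⟩
    have h1 := infDist_le_dist_of_mem (x := x) hγ.1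
    have h2 := hγ.2.2 0 1 le_rfl zero_le_one le_rfl
    rw [hγ.2.1, dist_comm] at h2
    linarith [hx' y]

theorem aux_extract {X : Type*} [MetricSpace X] [MeasurableSpace X] [BorelSpace X]
    [CompactSpace X] [ConnectedSpace X]
    (hfin : Measure.hausdorffMeasure 1 (univ : Set X) ≠ ⊤) :
    ∃ (K : ℕ → ℝ) (γ : ℕ → ℝ → X), (∀ j, 0 ≤ K j) ∧
      (∀ j s t, 0 ≤ s → s ≤ t → t ≤ 1 → dist (γ j s) (γ j t) ≤ K j * (t - s)) ∧
      (∀ k, ∑ j ∈ Finset.range k, K j ≤ (Measure.hausdorffMeasure 1 (univ : Set X)).toReal) ∧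
      (∀ j, ∃ i ≤ j, ∃ t ∈ Icc (0 : ℝ) 1, γ (j + 1) 0 = γ i t) ∧
      (∀ k y, ∃ i ≤ k, ∃ t ∈ Icc (0 : ℝ) 1, dist y (γ i t) ≤
        (Measure.hausdorffMeasure 1 (univ : Set X)).toReal / ((k : ℝ) + 1)) := by
  classical
  obtain ⟨x0⟩ := (inferInstance : Nonempty X)
  choose K γ hK h0 hL hd hm using fun T : {T : Set X // IsClosed T ∧ T.Nonempty} =>
    aux_step hfin T.2.1 T.2.2
  have hcl : ∀ T : {T : Set X // IsClosed T ∧ T.Nonempty}, IsClosed (γ T '' Icc 0 1) := fun T =>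
    (isCompact_Icc.image_of_continuousOn (aux_lip (hK T) (hL T)).continuousOn).isClosed
  obtain ⟨T, hT0, hTs⟩ : ∃ T : ℕ → {T : Set X // IsClosed T ∧ T.Nonempty}, (T 0).1 = {x0} ∧
      ∀ n, (T (n + 1)).1 = (T n).1 ∪ γ (T n) '' Icc 0 1 :=
    ⟨fun n => Nat.rec ⟨{x0}, isClosed_singleton, singleton_nonempty x0⟩
      (fun _ T => ⟨T.1 ∪ γ T '' Icc 0 1, T.2.1.union (hcl T), T.2.2.mono subset_union_left⟩) n,
      rfl, fun n => rfl⟩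
  have hx0 : γ (T 0) 0 = x0 := by simpa [hT0] using h0 (T 0)
  have hTmem : ∀ n y, y ∈ (T (n + 1)).1 → ∃ i ≤ n, ∃ t ∈ Icc (0 : ℝ) 1, γ (T i) t = y := by
    intro n
    induction n with
    | zero =>
      intro y hy
      rw [hTs] at hy
      rcases hy with hy | ⟨t, ht, rfl⟩
      · exact ⟨0, le_rfl, 0, by simp, by rw [hx0]; rw [hT0] at hy; exact (hy : y = x0).symm⟩
      · exact ⟨0, le_rfl, t, ht, rfl⟩
    | succ n ih =>
      intro y hy
      rw [hTs] at hy
      rcases hy with hy | ⟨t, ht, rfl⟩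
      · obtain ⟨i, hi, t, ht, h⟩ := ih y hy
        exact ⟨i, by omega, t, ht, h⟩
      · exact ⟨n + 1, le_rfl, t, ht, rfl⟩
  have hsumT : ∀ k, ENNReal.ofReal (∑ j ∈ Finset.range k, K (T j)) ≤
      Measure.hausdorffMeasure 1 (T k).1 := by
    intro k
    induction k with
    | zero => simp
    | succ k ih =>
      rw [Finset.sum_range_succ, ENNReal.ofReal_add (Finset.sum_nonneg fun j _ => hK _) (hK _), hTs,
        ← measure_add_sdiff (T k).2.1.measurableSet.nullMeasurableSet]
      exact add_le_add ih (hm (T k))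
  have hsum : ∀ k, ∑ j ∈ Finset.range k, K (T j) ≤
      (Measure.hausdorffMeasure 1 (univ : Set X)).toReal := fun k =>
    (ENNReal.ofReal_le_iff_le_toReal hfin).1 ((hsumT k).trans (measure_mono (subset_univ _)))
  have hanti : ∀ y i j, i ≤ j → infDist y (T j).1 ≤ infDist y (T i).1 := by
    intro y i j hij
    induction j, hij using Nat.le_induction with
    | base => exact le_rfl
    | succ j _ ih =>
      exact (infDist_le_infDist_of_subset (by rw [hTs]; exact subset_union_left) (T j).2.2).trans ih
  refine ⟨fun j => K (T j), fun j => γ (T j), fun j => hK _, fun j => hL _, hsum, ?_, ?_⟩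
  · intro j
    obtain ⟨i, hi, t, ht, h⟩ := hTmem j _ (h0 (T (j + 1)))
    exact ⟨i, hi, t, ht, h.symm⟩
  · intro k y
    obtain ⟨z, hz, hyz⟩ := (T (k + 1)).2.1.isCompact.exists_infDist_eq_dist (T (k + 1)).2.2 y
    obtain ⟨i, hi, t, ht, h⟩ := hTmem k _ hz
    refine ⟨i, hi, t, ht, ?_⟩
    simp only
    rw [h, ← hyz, le_div_iff₀ (by positivity)]
    refine le_trans ?_ (hsum (k + 1))
    calc infDist y (T (k + 1)).1 * ((k : ℝ) + 1)
        = ∑ j ∈ Finset.range (k + 1), infDist y (T (k + 1)).1 := by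
          simp [mul_comm]
      _ ≤ _ := Finset.sum_le_sum fun j hj => (hanti y j (k + 1)
          (Finset.mem_range.1 hj).le).trans (hd (T j) y)
end Aux2
section Aux3
open Set Filter Topology Metric MeasureTheory

/-- Closing up an increasing union of continua of finite length adds no length. -/
theorem aux_closure_null {Z : Type*} [MetricSpace Z] [MeasurableSpace Z] [BorelSpace Z]
    [CompactSpace Z] {T : ℕ → Set Z} (hcl : ∀ k, IsClosed (T k)) (hpc : ∀ k, IsPreconnected (T k))
    (hne : ∀ k, (T k).Nonempty) (hmono : Monotone T)
    (hfin : Measure.hausdorffMeasure 1 (⋃ k, T k) ≠ ⊤) {C : Set Z} {r : ℕ → ℝ}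
    (hr : Tendsto r atTop (𝓝 0)) (hC : ∀ k, ∀ x ∈ C, infDist x (T k) ≤ r k) :
    Measure.hausdorffMeasure 1 (C \ ⋃ k, T k) = 0 := by
  set E := C \ ⋃ k, T k with hE
  have hpos : ∀ k, ∀ x ∈ E, 0 < infDist x (T k) := by
    intro k x hx
    rw [← (hcl k).notMem_iff_infDist_pos (hne k)]
    exact fun h => hx.2 (mem_iUnion.2 ⟨k, h⟩)
  have hlow : ∀ k, ∀ x ∈ E, ENNReal.ofReal (infDist x (T k) / 4) ≤
      Measure.hausdorffMeasure 1 (((⋃ k, T k) \ T k) ∩ closedBall x (infDist x (T k) / 2)) := by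
    intro k x hx
    set s := infDist x (T k) with hs
    have hs0 : 0 < s := hpos k x hx
    obtain ⟨m, hm, hkm⟩ : ∃ m, r m < s / 4 ∧ k ≤ m :=
      ((hr.eventually (gt_mem_nhds (show (0 : ℝ) < s / 4 by linarith))).and
        (eventually_ge_atTop k)).exists
    have h1 : infDist x (T m) < s / 4 := (hC m x hx.1).trans_lt hm
    obtain ⟨p, hp, hxp⟩ := (infDist_lt_iff (hne m)).1 h1
    obtain ⟨q, hq⟩ := hne k
    have hxq : s ≤ dist x q := infDist_le_dist_of_mem hq
    have hpq : s / 4 ≤ dist p q := by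
      have := dist_triangle x p q
      linarith
    refine (aux_ball_measure (hpc m) hp (hmono hkm hq) hpq).trans (measure_mono ?_)
    rintro z ⟨hz, hzp⟩
    have hzx : dist z x ≤ s / 2 := by
      have := dist_triangle z p x
      rw [mem_ball] at hzp
      rw [dist_comm p x] at this
      linarith
    refine ⟨⟨mem_iUnion.2 ⟨m, hz⟩, fun hzk => ?_⟩, hzx⟩
    have := infDist_le_dist_of_mem (x := x) hzk
    rw [dist_comm] at this
    linarith
  -- Vitali
  have hvit := fun k => Vitali.exists_disjoint_subfamily_covering_enlargement_closedBall E
    (fun x => x) (fun x => infDist x (T k) / 2) (r k / 2)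
    (fun a ha => by linarith [hC k a ha.1]) 5 (by norm_num)
  choose u huE hud hucov using hvit
  have hcount : ∀ k, (u k).Countable := fun k =>
    (hud k).countable_of_nonempty_interior fun x hx => by
      refine ⟨x, interior_mono ball_subset_closedBall ?_⟩
      rw [isOpen_ball.interior_eq]
      exact mem_ball_self (by linarith [hpos k x (huE k hx)])
  have : ∀ k, Countable (u k) := fun k => (hcount k).to_subtype
  have hdiam : ∀ k (i : u k), Metric.ediam (closedBall i.1 (5 * (infDist i.1 (T k) / 2))) ≤
      ENNReal.ofReal (5 * infDist i.1 (T k)) := by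
    intro k i
    refine ediam_le fun a ha b hb => ?_
    rw [edist_dist]
    refine ENNReal.ofReal_le_ofReal ?_
    rw [mem_closedBall] at ha hb
    have := dist_triangle_right a b i.1
    linarith
  have hmeasU : MeasurableSet (⋃ k, T k) := MeasurableSet.iUnion fun k => (hcl k).measurableSet
  have hsum : ∀ k, ∑' i : u k, ENNReal.ofReal (infDist i.1 (T k) / 4) ≤
      Measure.hausdorffMeasure 1 ((⋃ k, T k) \ T k) := by
    intro k
    calc ∑' i : u k, ENNReal.ofReal (infDist i.1 (T k) / 4)
        ≤ ∑' i : u k, Measure.hausdorffMeasure 1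
          (((⋃ k, T k) \ T k) ∩ closedBall i.1 (infDist i.1 (T k) / 2)) :=
          ENNReal.tsum_le_tsum fun i => hlow k i.1 (huE k i.2)
      _ ≤ Measure.hausdorffMeasure 1 (⋃ i : u k,
          (((⋃ k, T k) \ T k) ∩ closedBall i.1 (infDist i.1 (T k) / 2))) := by
          refine tsum_meas_le_meas_iUnion_of_disjoint _ (fun i =>
            (hmeasU.diff (hcl k).measurableSet).inter isClosed_closedBall.measurableSet) ?_
          intro i j hij
          exact ((hud k) i.2 j.2 (fun h => hij (Subtype.ext h))).mono
            inter_subset_right inter_subset_right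
      _ ≤ _ := measure_mono (iUnion_subset fun i => inter_subset_left)
  have hto : Tendsto (fun k => Measure.hausdorffMeasure 1 ((⋃ k, T k) \ T k)) atTop (𝓝 0) := by
    have h := tendsto_measure_iInter_atTop (μ := (Measure.hausdorffMeasure 1 : Measure Z))
      (s := fun k => (⋃ k, T k) \ T k)
      (fun k => (hmeasU.diff (hcl k).measurableSet).nullMeasurableSet)
      (fun a b hab => sdiff_subset_sdiff_right (hmono hab))
      ⟨0, ne_top_of_le_ne_top hfin (measure_mono sdiff_subset)⟩
    have he : ⋂ k, ((⋃ k, T k) \ T k) = ∅ := by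
      ext z
      simp only [mem_iInter, Set.mem_sdiff, mem_iUnion, mem_empty_iff_false, iff_false, not_forall]
      by_cases hz : ∃ k, z ∈ T k
      · obtain ⟨k, hk⟩ := hz
        exact ⟨k, fun h => h.2 hk⟩
      · exact ⟨0, fun h => hz h.1⟩
    rw [he, measure_empty] at h
    exact h
  have hmain := Measure.hausdorffMeasure_le_liminf_tsum (ι := fun k => u k) (l := atTop) 1 E
    (fun k => ENNReal.ofReal (5 * r k))
    (by
      have := ENNReal.tendsto_ofReal (hr.const_mul 5)
      simpa using this)
    (fun k i => closedBall i.1 (5 * (infDist i.1 (T k) / 2)))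
    (Eventually.of_forall fun k i => (hdiam k i).trans
      (ENNReal.ofReal_le_ofReal (by linarith [hC k i.1 (huE k i.2).1])))
    (Eventually.of_forall fun k x hx => by
      obtain ⟨b, hb, hsub⟩ := hucov k x hx
      exact mem_iUnion.2 ⟨⟨b, hb⟩, hsub (mem_closedBall_self (by linarith [hpos k x hx]))⟩)
  have hbd : ∀ k, ∑' i : u k, Metric.ediam (closedBall i.1 (5 * (infDist i.1 (T k) / 2))) ^ (1 : ℝ)
      ≤ 20 * Measure.hausdorffMeasure 1 ((⋃ k, T k) \ T k) := by
    intro k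
    refine le_trans ?_ (mul_le_mul_right (hsum k) 20)
    rw [← ENNReal.tsum_mul_left]
    refine ENNReal.tsum_le_tsum fun i => ?_
    rw [ENNReal.rpow_one]
    refine (hdiam k i).trans (le_of_eq ?_)
    rw [show (20 : ENNReal) = ENNReal.ofReal 20 by simp, ← ENNReal.ofReal_mul (by norm_num)]
    congr 1
    ring
  have hto' : Tendsto (fun k => 20 * Measure.hausdorffMeasure 1 ((⋃ k, T k) \ T k))
      atTop (𝓝 0) := by
    have := ENNReal.Tendsto.const_mul (a := 20) hto (Or.inr (by norm_num))
    simpa using this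
  refine le_antisymm (hmain.trans ?_) zero_le
  rw [← hto'.liminf_eq]
  exact liminf_le_liminf (Eventually.of_forall hbd)
end Aux3
section Aux4
open Set Filter Topology Metric MeasureTheory

/-- The continuum swept out by a sequence of curves. -/
theorem aux_final {S Z : Type*} [MetricSpace S] [CompactSpace S] [MetricSpace Z]
    [MeasurableSpace Z] [BorelSpace Z] [CompactSpace Z] {σ : S → Z} (hσ : Isometry σ)
    {g : ℕ → unitInterval → Z} {K : ℕ → ℝ} {L : ℝ} (hK : ∀ j, 0 ≤ K j)
    (hg : ∀ j s t, dist (g j s) (g j t) ≤ K j * dist s t)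
    (hsum : ∀ k, ∑ j ∈ Finset.range k, K j ≤ L)
    (hconn : ∀ j, ∃ i ≤ j, ∃ t, g (j + 1) 0 = g i t)
    (hdens : ∀ k j t, ∃ i ≤ k, ∃ t', dist (g j t) (g i t') ≤ L / ((k : ℝ) + 1))
    (hA : ∀ A : Set S, IsClopen A → A.Nonempty → ∀ k : ℕ, ∃ a ∈ A, ∃ i ≤ k, ∃ t,
      dist (σ a) (g i t) ≤ L / ((k : ℝ) + 1)) :
    ∃ C : Set Z, IsCompact C ∧ IsConnected C ∧ IsCompact (C ∪ range σ) ∧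
      IsConnected (C ∪ range σ) ∧ Measure.hausdorffMeasure 1 C ≤ ENNReal.ofReal L := by
  have hlip : ∀ j, LipschitzWith (K j).toNNReal (g j) := fun j =>
    LipschitzWith.of_dist_le_mul fun s t => by
      rw [Real.coe_toNNReal _ (hK j)]; exact hg j s t
  set T : ℕ → Set Z := fun k => ⋃ j ∈ Finset.range (k + 1), range (g j) with hT
  have hTs : ∀ k, T (k + 1) = range (g (k + 1)) ∪ T k := by
    intro k
    simp only [hT]
    rw [Finset.range_add_one (n := k + 1), Finset.set_biUnion_insert]
  have hTmem : ∀ k i t, i ≤ k → g i t ∈ T k := by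
    intro k i t hi
    simp only [hT, mem_iUnion]
    exact ⟨i, by simpa using Nat.lt_succ_of_le hi, t, rfl⟩
  have hcomp : ∀ k, IsCompact (T k) := fun k =>
    (Finset.range (k + 1)).isCompact_biUnion fun j _ => isCompact_range (hlip j).continuous
  have hne : ∀ k, (T k).Nonempty := fun k => ⟨g 0 0, hTmem k 0 0 (Nat.zero_le k)⟩
  have hpc : ∀ k, IsPreconnected (T k) := by
    intro k
    induction k with
    | zero =>
      have : T 0 = range (g 0) := by simp [hT]
      rw [this]
      exact isPreconnected_range (hlip 0).continuous
    | succ k ih =>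
      rw [hTs]
      obtain ⟨i, hi, t, h⟩ := hconn k
      exact IsPreconnected.union (g (k + 1) 0) ⟨0, rfl⟩ (h ▸ hTmem k i t hi)
        (isPreconnected_range (hlip _).continuous) ih
  have hmono : Monotone T := monotone_nat_of_le_succ fun k => by
    rw [hTs]; exact subset_union_right
  have hL0 : 0 ≤ L := by simpa using hsum 0
  have hUeq : ⋃ k, T k = ⋃ j, range (g j) := by
    apply subset_antisymm
    · refine iUnion_subset fun k => iUnion₂_subset fun j _ =>
        subset_iUnion (fun j => range (g j)) j
    · refine iUnion_subset fun j => ?_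
      rintro _ ⟨t, rfl⟩
      exact mem_iUnion.2 ⟨j, hTmem j j t le_rfl⟩
  have hUm : Measure.hausdorffMeasure 1 (⋃ k, T k) ≤ ENNReal.ofReal L := by
    rw [hUeq]
    refine (measure_iUnion_le _).trans ?_
    have h1 : ∀ j, Measure.hausdorffMeasure 1 (range (g j)) ≤ ENNReal.ofReal (K j) := by
      intro j
      have h := (hlip j).hausdorffMeasure_image_le (d := 1) zero_le_one univ
      have h2 : Measure.hausdorffMeasure 1 (univ : Set unitInterval) = 1 := by
        have := (isometry_subtype_coe (s := (unitInterval : Set ℝ))).hausdorffMeasure_image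
          (d := 1) (Or.inl zero_le_one) univ
        rw [← this, image_univ, Subtype.range_coe, hausdorffMeasure_real]
        simp [unitInterval]
      rw [h2, image_univ, ENNReal.rpow_one, mul_one] at h
      exact h
    refine (ENNReal.tsum_le_tsum h1).trans ?_
    refine ENNReal.tsum_le_of_sum_range_le fun k => ?_
    rw [← ENNReal.ofReal_sum_of_nonneg fun j _ => hK j]
    exact ENNReal.ofReal_le_ofReal (hsum k)
  have hr : Tendsto (fun k : ℕ => L / ((k : ℝ) + 1)) atTop (𝓝 0) := by
    have := tendsto_one_div_add_atTop_nhds_zero_nat (𝕜 := ℝ).const_mul L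
    simpa [div_eq_mul_inv] using this
  have hC : ∀ k, ∀ x ∈ closure (⋃ k, T k), infDist x (T k) ≤ L / ((k : ℝ) + 1) := by
    intro k
    have hcl : IsClosed {x | infDist x (T k) ≤ L / ((k : ℝ) + 1)} :=
      isClosed_le (continuous_infDist_pt _) continuous_const
    refine closure_minimal ?_ hcl
    rw [hUeq]
    refine iUnion_subset fun j => ?_
    rintro _ ⟨t, rfl⟩
    obtain ⟨i, hi, t', h⟩ := hdens k j t
    exact (infDist_le_dist_of_mem (hTmem k i t' hi)).trans h
  have hnull := aux_closure_null (fun k => (hcomp k).isClosed) hpc hne hmono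
    (ne_top_of_le_ne_top ENNReal.ofReal_ne_top hUm) hr hC
  set C := closure (⋃ k, T k) with hCdef
  have hgC : ∀ i t, g i t ∈ C := fun i t =>
    subset_closure (mem_iUnion.2 ⟨i, hTmem i i t le_rfl⟩)
  have hCc : IsCompact C := isClosed_closure.isCompact
  have hCp : IsPreconnected C := by
    refine IsPreconnected.closure (isPreconnected_iUnion ⟨g 0 0, ?_⟩ hpc)
    exact mem_iInter.2 fun k => hTmem k 0 0 (Nat.zero_le k)
  have hmeet : ∀ A : Set S, IsClopen A → A.Nonempty → (σ '' A ∩ C).Nonempty := by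
    intro A hAc hAn
    have hAcomp : IsCompact (σ '' A) := hAc.1.isCompact.image hσ.continuous
    by_contra hemp
    rw [not_nonempty_iff_eq_empty, ← disjoint_iff_inter_eq_empty] at hemp
    obtain ⟨δ, hδ, hdist⟩ := hemp.exists_thickenings hAcomp isClosed_closure
    obtain ⟨k, hk⟩ := (hr.eventually (gt_mem_nhds hδ)).exists
    obtain ⟨a, ha, i, -, t, hat⟩ := hA A hAc hAn k
    refine disjoint_left.1 hdist (mem_thickening_iff.2 ⟨σ a, mem_image_of_mem _ ha, ?_⟩)
      (self_subset_thickening hδ _ (hgC i t))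
    rw [dist_comm]
    linarith
  have hSc : IsCompact (range σ) := isCompact_range hσ.continuous
  have hunion : IsPreconnected (C ∪ range σ) := by
    rw [isPreconnected_iff_subset_of_fully_disjoint_closed (hCc.union hSc).isClosed]
    have key : ∀ u v : Set Z, IsClosed u → IsClosed v → C ∪ range σ ⊆ u ∪ v → Disjoint u v →
        C ⊆ u → C ∪ range σ ⊆ u := by
      intro u v hu hv huv hdis hCu
      refine union_subset hCu ?_
      have hpre : σ ⁻¹' v = (σ ⁻¹' u)ᶜ := by
        ext s
        simp only [mem_preimage, mem_compl_iff]
        constructor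
        · exact fun h1 h2 => disjoint_left.1 hdis h2 h1
        · exact fun h => (huv (Or.inr ⟨s, rfl⟩)).resolve_left h
      have hclopen : IsClopen (σ ⁻¹' v) := by
        refine ⟨hv.preimage hσ.continuous, ?_⟩
        rw [hpre]
        exact (hu.preimage hσ.continuous).isOpen_compl
      rintro _ ⟨s, rfl⟩
      by_contra hs
      obtain ⟨_, ⟨a, ha, rfl⟩, haC⟩ := hmeet _ hclopen
        ⟨s, (huv (Or.inr ⟨s, rfl⟩)).resolve_left hs⟩
      exact disjoint_left.1 hdis (hCu haC) ha
    intro u v hu hv huv hdis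
    rcases (isPreconnected_iff_subset_of_fully_disjoint_closed hCc.isClosed).1 hCp u v hu hv
      (subset_union_left.trans huv) hdis with h | h
    · exact Or.inl (key u v hu hv huv hdis h)
    · exact Or.inr (key v u hv hu (by rwa [union_comm v u]) hdis.symm h)
  have hCne : C.Nonempty := ⟨g 0 0, hgC 0 0⟩
  refine ⟨C, hCc, ⟨hCne, hCp⟩, hCc.union hSc, ⟨hCne.mono subset_union_left, hunion⟩, ?_⟩
  calc Measure.hausdorffMeasure 1 C
      ≤ Measure.hausdorffMeasure 1 ((⋃ k, T k) ∪ (C \ ⋃ k, T k)) := by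
        refine measure_mono ?_
        rw [union_sdiff_self]; exact subset_union_right
    _ ≤ _ := measure_union_le _ _
    _ ≤ _ := by rw [hnull, add_zero]; exact hUm

/-- Index type of the limit space. -/
def AuxI (S : Type) : Type := S ⊕ (ℕ × unitInterval)

/-- A pseudodistance on the index set compatible with `S` and with a sequence of curves. -/
structure AuxData (S : Type) [MetricSpace S] (L : ℝ) (K : ℕ → ℝ) (D : AuxI S → AuxI S → ℝ) :
    Prop where
  self : ∀ a, D a a = 0
  comm : ∀ a b, D a b = D b a
  tri : ∀ a b c, D a c ≤ D a b + D b c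
  iso : ∀ s t : S, D (Sum.inl s) (Sum.inl t) = dist s t
  hK : ∀ j, 0 ≤ K j
  hg : ∀ j s t, D (Sum.inr (j, s)) (Sum.inr (j, t)) ≤ K j * dist s t
  hsum : ∀ k, ∑ j ∈ Finset.range k, K j ≤ L
  hconn : ∀ j, ∃ i ≤ j, ∃ t, D (Sum.inr (j + 1, 0)) (Sum.inr (i, t)) ≤ 0
  hdens : ∀ (k : ℕ) j t, ∃ i ≤ k, ∃ t',
    D (Sum.inr (j, t)) (Sum.inr (i, t')) ≤ L / ((k : ℝ) + 1)
  hA : ∀ A : Set S, IsClopen A → A.Nonempty → ∀ k : ℕ, ∃ a ∈ A, ∃ i ≤ k, ∃ t,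
    D (Sum.inl a) (Sum.inr (i, t)) ≤ L / ((k : ℝ) + 1)
  hbd : ∀ p q, D (Sum.inr p) (Sum.inr q) ≤ L

theorem AuxData.realize {S : Type} [MetricSpace S] [CompactSpace S] {L : ℝ} {K : ℕ → ℝ}
    {D : AuxI S → AuxI S → ℝ} (h : AuxData S L K D) :
    ∃ (Z : Type) (_ : MetricSpace Z) (_ : CompactSpace Z) (ι : S → Z),
      Isometry ι ∧ ∃ C : Set Z, IsCompact C ∧ IsConnected C ∧
        IsCompact (C ∪ Set.range ι) ∧ IsConnected (C ∪ Set.range ι) ∧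
        H1 Z C ≤ ENNReal.ofReal L := by
  letI : PseudoMetricSpace (AuxI S) :=
    { dist := D
      dist_self := h.self
      dist_comm := h.comm
      dist_triangle := h.tri }
  have hD : ∀ a b : AuxI S, dist a b = D a b := fun a b => rfl
  let inS : S → AuxI S := Sum.inl
  let inG : ℕ → unitInterval → AuxI S := fun j t => Sum.inr (j, t)
  have hiS : Isometry inS := Isometry.of_dist_eq fun s t => h.iso s t
  have hlip : ∀ j, LipschitzWith (K j).toNNReal (inG j) := fun j =>
    LipschitzWith.of_dist_le_mul fun s t => by
      rw [Real.coe_toNNReal _ (h.hK j)]; exact h.hg j s t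
  have hr : Tendsto (fun k : ℕ => L / ((k : ℝ) + 1)) atTop (𝓝 0) := by
    have := tendsto_one_div_add_atTop_nhds_zero_nat (𝕜 := ℝ).const_mul L
    simpa [div_eq_mul_inv] using this
  have htb : TotallyBounded (univ : Set (AuxI S)) := by
    rw [Metric.totallyBounded_iff]
    intro ε hε
    obtain ⟨k, hk⟩ := (hr.eventually (gt_mem_nhds (half_pos hε))).exists
    have hQ : IsCompact (range inS ∪ ⋃ j ∈ Finset.range (k + 1), range (inG j)) :=
      (isCompact_range hiS.continuous).union ((Finset.range (k + 1)).isCompact_biUnion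
        fun j _ => isCompact_range (hlip j).continuous)
    obtain ⟨t, ht, hcov⟩ := Metric.totallyBounded_iff.1 hQ.totallyBounded (ε / 2) (half_pos hε)
    refine ⟨t, ht, fun x _ => ?_⟩
    obtain ⟨y, hy, hxy⟩ : ∃ y ∈ range inS ∪ ⋃ j ∈ Finset.range (k + 1), range (inG j),
        dist x y < ε / 2 := by
      rcases x with s | ⟨j, t⟩
      · exact ⟨inS s, Or.inl ⟨s, rfl⟩, (le_of_eq (h.self _)).trans_lt (half_pos hε)⟩
      · obtain ⟨i, hi, t', hd⟩ := h.hdens k j t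
        refine ⟨inG i t', Or.inr ?_, lt_of_le_of_lt hd hk⟩
        simp only [mem_iUnion]
        exact ⟨i, by simpa using Nat.lt_succ_of_le hi, t', rfl⟩
    obtain ⟨z, hz, hyz⟩ := mem_iUnion₂.1 (hcov hy)
    refine mem_iUnion₂.2 ⟨z, hz, ?_⟩
    rw [mem_ball] at hyz ⊢
    linarith [dist_triangle x y z]
  let Z := UniformSpace.Completion (AuxI S)
  have hcoe : Isometry ((↑) : AuxI S → Z) := UniformSpace.Completion.coe_isometry
  have hZ : CompactSpace Z := by
    refine ⟨isCompact_iff_totallyBounded_isComplete.2 ⟨?_, isClosed_univ.isComplete⟩⟩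
    have h1 := (htb.image hcoe.uniformContinuous).closure
    rw [image_univ, (UniformSpace.Completion.denseRange_coe (α := AuxI S)).closure_range] at h1
    exact h1
  letI : MeasurableSpace Z := borel Z
  haveI : BorelSpace Z := ⟨rfl⟩
  refine ⟨Z, inferInstance, hZ, fun s => ((inS s : AuxI S) : Z), hcoe.comp hiS, ?_⟩
  refine aux_final (Z := Z) (σ := fun s => ((inS s : AuxI S) : Z)) (hcoe.comp hiS)
    (g := fun j t => ((inG j t : AuxI S) : Z)) (K := K) h.hK ?_ h.hsum ?_ ?_ ?_
  · intro j s t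
    rw [hcoe.dist_eq]
    exact h.hg j s t
  · intro j
    obtain ⟨i, hi, t, ht⟩ := h.hconn j
    refine ⟨i, hi, t, ?_⟩
    rw [← dist_le_zero, hcoe.dist_eq]
    exact ht
  · intro k j t
    obtain ⟨i, hi, t', ht⟩ := h.hdens k j t
    refine ⟨i, hi, t', ?_⟩
    rw [hcoe.dist_eq]
    exact ht
  · intro A hAc hAn k
    obtain ⟨a, ha, i, hi, t', ht⟩ := h.hA A hAc hAn k
    refine ⟨a, ha, i, hi, t', ?_⟩
    rw [hcoe.dist_eq]
    exact ht

end Aux4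
section Aux5
open Set Filter Topology Metric MeasureTheory

theorem aux_ulim_real {u : ℕ → ℝ} {B : ℝ} (h0 : ∀ n, 0 ≤ u n) (hB : ∀ n, u n ≤ B) :
    ∃ x, Tendsto u (hyperfilter ℕ : Filter ℕ) (𝓝 x) := by
  obtain ⟨x, -, hx⟩ := (isCompact_Icc (a := (0 : ℝ)) (b := B)).ultrafilter_le_nhds
    ((hyperfilter ℕ).map u) (by
      rw [Ultrafilter.coe_map, le_principal_iff, mem_map]
      exact Filter.univ_mem' fun n => ⟨h0 n, hB n⟩)
  exact ⟨x, hx⟩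

theorem AuxData.nonneg {S : Type} [MetricSpace S] {L : ℝ} {K : ℕ → ℝ}
    {D : AuxI S → AuxI S → ℝ} (h : AuxData S L K D) (a b : AuxI S) : 0 ≤ D a b := by
  have h1 := h.tri a b a
  rw [h.self, h.comm b a] at h1
  linarith

theorem AuxData.bound {S : Type} [MetricSpace S] [CompactSpace S] {L : ℝ} {K : ℕ → ℝ}
    {D : AuxI S → AuxI S → ℝ} (h : AuxData S L K D) (a b : AuxI S) :
    D a b ≤ diam (univ : Set S) + 2 * L := by
  have hd : ∀ s t : S, dist s t ≤ diam (univ : Set S) := fun s t =>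
    dist_le_diam_of_mem isCompact_univ.isBounded (mem_univ s) (mem_univ t)
  have hd0 : 0 ≤ diam (univ : Set S) := diam_nonneg
  have hL : 0 ≤ L := by simpa using h.hsum 0
  have key : ∀ (s : S) (p : ℕ × unitInterval), D (Sum.inl s) (Sum.inr p) ≤
      diam (univ : Set S) + 2 * L := by
    intro s p
    obtain ⟨a, -, i, -, t, hat⟩ := h.hA univ isClopen_univ ⟨s, mem_univ s⟩ 0
    have h1 := h.tri (Sum.inl s) (Sum.inl a) (Sum.inr p)
    have h2 := h.tri (Sum.inl a) (Sum.inr (i, t)) (Sum.inr p)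
    have h3 := h.hbd (i, t) p
    have h4 := h.iso s a
    have h5 := hd s a
    simp only [Nat.cast_zero, zero_add, div_one] at hat
    linarith
  rcases a with s | p <;> rcases b with t | q
  · have h4 := h.iso s t
    have h5 := hd s t
    exact (le_of_eq h4).trans (by linarith)
  · exact key s q
  · exact (le_of_eq (h.comm _ _)).trans (key t p)
  · have := h.hbd p q
    exact this.trans (by linarith)

theorem AuxData.ultralimit {S : Type} [MetricSpace S] [CompactSpace S] {L : ℕ → ℝ} {L' : ℝ}
    {K : ℕ → ℕ → ℝ} {D : ℕ → AuxI S → AuxI S → ℝ} (h : ∀ n, AuxData S (L n) (K n) (D n))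
    (hL : Tendsto L atTop (𝓝 L')) : ∃ K' D', AuxData S L' K' D' := by
  obtain ⟨B, hB⟩ := hL.bddAbove_range
  have hB' : ∀ n, L n ≤ B := fun n => hB ⟨n, rfl⟩
  have hU : Tendsto L (hyperfilter ℕ : Filter ℕ) (𝓝 L') := hL.mono_left aux_hyper_le
  have hDlim : ∀ a b, ∃ x, Tendsto (fun n => D n a b) (hyperfilter ℕ : Filter ℕ) (𝓝 x) :=
    fun a b => aux_ulim_real (B := diam (univ : Set S) + 2 * B) (fun n => (h n).nonneg a b)
      (fun n => ((h n).bound a b).trans (by linarith [hB' n]))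
  have hKle : ∀ n j, K n j ≤ L n := fun n j =>
    (Finset.single_le_sum (f := K n) (fun i _ => (h n).hK i) (Finset.self_mem_range_succ j)).trans
      ((h n).hsum (j + 1))
  have hKlim : ∀ j, ∃ x, Tendsto (fun n => K n j) (hyperfilter ℕ : Filter ℕ) (𝓝 x) :=
    fun j => aux_ulim_real (B := B) (fun n => (h n).hK j) (fun n => (hKle n j).trans (hB' n))
  choose D' hD' using hDlim
  choose K' hK' using hKlim
  have key : ∀ (x : AuxI S) (k : ℕ) (e : ℕ → ℝ) (e' : ℝ),
      Tendsto e (hyperfilter ℕ : Filter ℕ) (𝓝 e') →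
      (∀ n, ∃ i ≤ k, ∃ t, D n x (Sum.inr (i, t)) ≤ e n) →
      ∃ i ≤ k, ∃ t, D' x (Sum.inr (i, t)) ≤ e' := by
    intro x k e e' he hex
    choose i hi t ht using hex
    obtain ⟨i', hi'⟩ := aux_ulim (fun n => (⟨i n, Nat.lt_succ_of_le (hi n)⟩ : Fin (k + 1)))
    obtain ⟨t', ht'⟩ := aux_ulim t
    rw [nhds_discrete, tendsto_pure] at hi'
    refine ⟨i', Nat.le_of_lt_succ i'.2, t', ?_⟩
    have hdist : Tendsto (fun n => dist (t n) t') (hyperfilter ℕ : Filter ℕ) (𝓝 0) :=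
      tendsto_iff_dist_tendsto_zero.1 ht'
    have hlim := he.add ((hK' i').mul hdist)
    rw [mul_zero, add_zero] at hlim
    refine le_of_tendsto_of_tendsto (hD' x (Sum.inr (i', t'))) hlim ?_
    filter_upwards [hi'] with n hn
    have hin : i n = i' := congrArg Fin.val hn
    have h1 := (h n).tri x (Sum.inr (i n, t n)) (Sum.inr (i', t'))
    have h2 := (h n).hg i' (t n) t'
    rw [hin] at h1
    have h3 := ht n
    rw [hin] at h3
    linarith
  refine ⟨K', D', ?_⟩
  constructor
  · intro a
    refine tendsto_nhds_unique (hD' a a) ?_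
    simp [fun n => (h n).self a]
  · intro a b
    refine tendsto_nhds_unique (hD' a b) ?_
    simp only [fun n => (h n).comm a b]
    exact hD' b a
  · intro a b c
    exact le_of_tendsto_of_tendsto (hD' a c) ((hD' a b).add (hD' b c))
      (Eventually.of_forall fun n => (h n).tri a b c)
  · intro s t
    refine tendsto_nhds_unique (hD' _ _) ?_
    simp only [fun n => (h n).iso s t]
    exact tendsto_const_nhds
  · intro j
    exact ge_of_tendsto (hK' j) (Eventually.of_forall fun n => (h n).hK j)
  · intro j s t
    exact le_of_tendsto_of_tendsto (hD' _ _) ((hK' j).mul_const _)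
      (Eventually.of_forall fun n => (h n).hg j s t)
  · intro k
    exact le_of_tendsto_of_tendsto (tendsto_finset_sum _ fun j _ => hK' j) hU
      (Eventually.of_forall fun n => (h n).hsum k)
  · intro j
    exact key _ j (fun _ => 0) 0 tendsto_const_nhds fun n => (h n).hconn j
  · intro k j t
    exact key _ k _ _ (hU.div_const _) fun n => (h n).hdens k j t
  · intro A hAc hAn k
    choose a ha i hi t ht using fun n => (h n).hA A hAc hAn k
    obtain ⟨a', ha'⟩ := aux_ulim a
    have haA : a' ∈ A := hAc.1.mem_of_tendsto ha' (Eventually.of_forall ha)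
    have hdist : Tendsto (fun n => dist a' (a n)) (hyperfilter ℕ : Filter ℕ) (𝓝 0) := by
      simp only [dist_comm a']
      exact tendsto_iff_dist_tendsto_zero.1 ha'
    have he := hdist.add (hU.div_const ((k : ℝ) + 1))
    rw [zero_add] at he
    refine ⟨a', haA, key (Sum.inl a') k _ _ he fun n => ⟨i n, hi n, t n, ?_⟩⟩
    have h1 := (h n).tri (Sum.inl a') (Sum.inl (a n)) (Sum.inr (i n, t n))
    have h2 := (h n).iso a' (a n)
    have h3 := ht n
    linarith
  · intro p q
    exact le_of_tendsto_of_tendsto (hD' _ _) hU (Eventually.of_forall fun n => (h n).hbd p q)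

theorem AuxData.of_continuum {S : Type} [MetricSpace S] [CompactSpace S] {X : Type}
    [MetricSpace X] {ι : S → X} (hι : Isometry ι) {C : Set X} (hC : IsCompact C)
    (hCc : IsConnected C) (hU : IsConnected (C ∪ range ι)) {L : ℝ} (hL0 : 0 ≤ L)
    (hL : H1 X C ≤ ENNReal.ofReal L) : ∃ K D, AuxData S L K D := by
  letI : MeasurableSpace X := borel X
  haveI : BorelSpace X := ⟨rfl⟩
  have hL' : Measure.hausdorffMeasure 1 C ≤ ENNReal.ofReal L := hL
  haveI : CompactSpace C := isCompact_iff_compactSpace.1 hC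
  haveI : ConnectedSpace C := isConnected_iff_connectedSpace.1 hCc
  have hm : Measure.hausdorffMeasure 1 (univ : Set C) = Measure.hausdorffMeasure 1 C := by
    rw [← (isometry_subtype_coe (s := C)).hausdorffMeasure_image (d := 1) (Or.inl zero_le_one) univ,
      image_univ, Subtype.range_coe]
  have hfin : Measure.hausdorffMeasure 1 (univ : Set C) ≠ ⊤ := by
    rw [hm]; exact ne_top_of_le_ne_top ENNReal.ofReal_ne_top hL'
  have hM : (Measure.hausdorffMeasure 1 (univ : Set C)).toReal ≤ L := by
    rw [hm]; exact ENNReal.toReal_le_of_le_ofReal hL0 hL'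
  obtain ⟨K, γ, hK, hLip, hsum, hconn, hdens⟩ := aux_extract hfin
  have hdens' : ∀ (k : ℕ) (y : C), ∃ i ≤ k, ∃ t : unitInterval,
      dist (y : X) (γ i t) ≤ L / ((k : ℝ) + 1) := by
    intro k y
    obtain ⟨i, hi, t, ht, hd⟩ := hdens k y
    refine ⟨i, hi, ⟨t, ht⟩, le_trans hd ?_⟩
    gcongr
  let F : AuxI S → X := fun a => Sum.elim ι (fun p : ℕ × unitInterval => (γ p.1 p.2 : X)) a
  refine ⟨K, fun a b => dist (F a) (F b), ?_⟩
  constructor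
  · exact fun a => dist_self _
  · exact fun a b => dist_comm _ _
  · exact fun a b c => dist_triangle _ _ _
  · exact fun s t => hι.dist_eq s t
  · exact hK
  · intro j s t
    have := (aux_lip (hK j) (hLip j)).dist_le_mul s.1 s.2 t.1 t.2
    rw [Real.coe_toNNReal _ (hK j)] at this
    exact this
  · exact fun k => (hsum k).trans hM
  · intro j
    obtain ⟨i, hi, t, ht, he⟩ := hconn j
    refine ⟨i, hi, ⟨t, ht⟩, ?_⟩
    change dist (γ (j + 1) 0 : X) (γ i t : X) ≤ 0
    rw [he, dist_self]
  · exact fun k j t => hdens' k (γ j t)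
  · intro A hAc hAn k
    obtain ⟨a, haA, haC⟩ : ∃ a ∈ A, ι a ∈ C := by
      by_contra! hno
      have hcl : ∀ B : Set S, IsClosed B → IsClosed (ι '' B) := fun B hB =>
        (hB.isCompact.image hι.continuous).isClosed
      obtain ⟨c, hc⟩ := hCc.nonempty
      obtain ⟨a, ha⟩ := hAn
      obtain ⟨z, -, hz1, ⟨b, hb, rfl⟩⟩ := isPreconnected_closed_iff.1 hU.isPreconnected
        (C ∪ ι '' Aᶜ) (ι '' A) (hC.isClosed.union (hcl _ hAc.2.isClosed_compl)) (hcl _ hAc.1)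
        (by
          rintro z (hz | ⟨s, rfl⟩)
          · exact Or.inl (Or.inl hz)
          · by_cases hs : s ∈ A
            · exact Or.inr ⟨s, hs, rfl⟩
            · exact Or.inl (Or.inr ⟨s, hs, rfl⟩))
        ⟨c, Or.inl hc, Or.inl hc⟩ ⟨ι a, Or.inr ⟨a, rfl⟩, ⟨a, ha, rfl⟩⟩
      rcases hz1 with hz | ⟨b', hb', hbb⟩
      · exact hno b hb hz
      · exact hb' (hι.injective hbb ▸ hb)
    obtain ⟨i, hi, t, hd⟩ := hdens' k ⟨ι a, haC⟩
    exact ⟨a, haA, i, hi, t, hd⟩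
  · intro p q
    have := (aux_ball_measure hCc.isPreconnected (γ p.1 p.2).2 (γ q.1 q.2).2 le_rfl).trans
      ((measure_mono inter_subset_left).trans hL')
    exact (ENNReal.ofReal_le_ofReal_iff hL0).1 this

end Aux5

/-- **Main theorem.** Let `S` be a compact metric space with `St(S) < ∞`. Then the
absolute Steiner invariant is realized: there exist a compact metric space `Z`, an
isometric embedding `ι : S → Z` and a continuum `C ⊆ Z` such that `C ∪ ι(S)` is a
continuum and `H¹(C) = St(S) = St(ι(S), Z)`. -/
theorem absSteiner_realized (S : Type) [MetricSpace S] [CompactSpace S]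
    (hfin : absSteiner S < ⊤) :
    ∃ (Z : Type) (_ : MetricSpace Z) (_ : CompactSpace Z) (ι : S → Z),
      Isometry ι ∧
      relSteiner Z (Set.range ι) = absSteiner S ∧
      ∃ C : Set Z, IsCompact C ∧ IsConnected C ∧
        IsCompact (C ∪ Set.range ι) ∧ IsConnected (C ∪ Set.range ι) ∧
        H1 Z C = absSteiner S := by
  have hstep : ∀ n : ℕ, ∃ K D, AuxData S ((absSteiner S).toReal + 1 / ((n : ℝ) + 1)) K D := by
    intro n
    have hpos : (0 : ℝ) < 1 / ((n : ℝ) + 1) := by positivity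
    have hlt : absSteiner S < ENNReal.ofReal ((absSteiner S).toReal + 1 / ((n : ℝ) + 1)) := by
      rw [ENNReal.lt_ofReal_iff_toReal_lt hfin.ne]
      linarith
    have h1 := hlt
    unfold absSteiner at h1
    rw [sInf_lt_iff] at h1
    obtain ⟨r, ⟨X, hX, ι, hι, rfl⟩, hr⟩ := h1
    unfold relSteiner at hr
    rw [sInf_lt_iff] at hr
    obtain ⟨r, ⟨C, hC, hCc, -, hU, rfl⟩, hr⟩ := hr
    exact AuxData.of_continuum hι hC hCc hU (by positivity) hr.le
  choose K D hKD using hstep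
  have hlim : Filter.Tendsto (fun n : ℕ => (absSteiner S).toReal + 1 / ((n : ℝ) + 1))
      Filter.atTop (nhds (absSteiner S).toReal) := by
    simpa using (tendsto_one_div_add_atTop_nhds_zero_nat (𝕜 := ℝ)).const_add (absSteiner S).toReal
  obtain ⟨K', D', h'⟩ := AuxData.ultralimit hKD hlim
  obtain ⟨Z, hZ, hZc, ι, hι, C, hC, hCc, hU, hUc, hH⟩ := h'.realize
  rw [ENNReal.ofReal_toReal hfin.ne] at hH
  have h1 : absSteiner S ≤ relSteiner Z (Set.range ι) := sInf_le ⟨Z, hZ, ι, hι, rfl⟩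
  have h2 : relSteiner Z (Set.range ι) ≤ H1 Z C := sInf_le ⟨C, hC, hCc, hU, hUc, rfl⟩
  exact ⟨Z, hZ, hZc, ι, hι, le_antisymm (h2.trans hH) h1, C, hC, hCc, hU, hUc,
    le_antisymm hH (h1.trans h2)⟩
end
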